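/- For every nonzero polynomial F ∈ ℂ_p[X₁^{±1},…,X_n^{±1}] there exists κ > 0 with the following property: if ζ ∈ G_m^n(ℂ_p) has finite order and δ(ζ) is sufficiently large in terms of F, then F(σ(ζ)) ≠ 0 for all σ ∈ Gal(ℚ(ζ)/ℚ), and (1/[ℚ(ζ):ℚ])·Σ_{σ∈Gal(ℚ(ζ)/ℚ)} log|F(σ(ζ))|_p = log|F|_p + O(δ(ζ)^{-κ}) as δ(ζ) → ∞, with implicit constant depending only on n and F. -/

import Mathlib

/-- The `p`-adic Gauss norm of a multivariate polynomial. -/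
noncomputable def mvGaussNorm {K : Type*} [NontriviallyNormedField K] {n : ℕ}
    (F : MvPolynomial (Fin n) K) : ℝ :=
  ((F.support.sup fun d => ‖F.coeff d‖₊ : NNReal) : ℝ)

/-- `δ(ζ)`: the minimum of the maximum norm `|a|` over nonzero `a ∈ ℤ^n` with
`ζ^a = 1`. -/
noncomputable def deltaNat {K : Type*} [Field K] {n : ℕ} (ζ : Fin n → Kˣ) : ℕ :=
  sInf {m : ℕ | ∃ a : Fin n → ℤ, a ≠ 0 ∧ (∏ i, ζ i ^ a i = 1) ∧
    m = Finset.univ.sup fun i => (a i).natAbs}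

set_option linter.unusedSectionVars false
set_option linter.style.haveILetI false

section PartOne
variable {K : Type*} [Field K] [CharZero K] [DecidableEq K]

/-- Galois conjugation of rational relations between roots of unity. -/
lemma conj_sum {ι : Type*} (s : Finset ι) (c : ι → ℚ) {N : ℕ} (hN : 0 < N) {ω : K}
    (hω : IsPrimitiveRoot ω N) (u : ι → ℕ) (a : ℕ) (ha : a.Coprime N)
    (h : ∑ i ∈ s, (c i : K) * ω ^ (u i) = 0) :
    ∑ i ∈ s, (c i : K) * ω ^ (a * u i) = 0 := by
  set P : Polynomial ℚ := ∑ i ∈ s, Polynomial.C (c i) * Polynomial.X ^ (u i) with hP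
  have hev : ∀ x : K, Polynomial.aeval x P = ∑ i ∈ s, (c i : K) * x ^ (u i) := by
    intro x
    simp [hP, map_sum]
  have h1 : Polynomial.aeval ω P = 0 := by rw [hev, h]
  have hdvd : Polynomial.cyclotomic N ℚ ∣ P := by
    rw [Polynomial.cyclotomic_eq_minpoly_rat hω hN]
    exact minpoly.dvd ℚ ω h1
  have hωa : IsPrimitiveRoot (ω ^ a) N := hω.pow_of_coprime a ha
  have h2 : Polynomial.aeval (ω ^ a) P = 0 := by
    rw [Polynomial.cyclotomic_eq_minpoly_rat hωa hN] at hdvd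
    exact (minpoly.dvd_iff).1 hdvd
  rw [hev] at h2
  simpa only [pow_mul] using h2

lemma geom_root {q : ℕ} {x : K} (hx : x ^ q = 1) :
    ∑ j ∈ Finset.range q, x ^ j = if x = 1 then (q : K) else 0 := by
  split_ifs with h
  · simp [h]
  · have := geom_sum_mul x q
    rw [hx, sub_self] at this
    rcases mul_eq_zero.1 this with h' | h'
    · exact h'
    · exact absurd (sub_eq_zero.1 h') h

/-- One step of the splitting, with the relation written using powers. -/
lemma step_one {ι : Type*} (s : Finset ι) (c : ι → ℚ) {N q n' : ℕ} (hN : 0 < N) (hq : q.Prime)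
    (hNq : N = q * n') (hqn : q ∣ n') (η : ι → K) (hη : ∀ k ∈ s, η k ^ N = 1)
    [HasEnoughRootsOfUnity K N]
    (h : ∑ k ∈ s, (c k : K) * η k = 0) :
    ∑ k ∈ s with η k ^ n' = 1, (c k : K) * η k = 0 := by
  classical
  obtain ⟨ω, hω⟩ := HasEnoughRootsOfUnity.exists_primitiveRoot K N
  have : NeZero N := ⟨hN.ne'⟩
  have hu : ∀ k, ∃ u : ℕ, k ∈ s → η k = ω ^ u := by
    intro k
    by_cases hk : k ∈ s
    · obtain ⟨i, -, hi⟩ := hω.eq_pow_of_pow_eq_one (hη k hk)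
      exact ⟨i, fun _ => hi.symm⟩
    · exact ⟨0, fun h => absurd h hk⟩
  choose u hu using hu
  have hrel : ∑ k ∈ s, (c k : K) * ω ^ (u k) = 0 := by
    rw [← h]; exact Finset.sum_congr rfl fun k hk => by rw [← hu k hk]
  have hj : ∀ j, ∑ k ∈ s, (c k : K) * (η k * (η k ^ n') ^ j) = 0 := by
    intro j
    have hcop : (1 + j * n').Coprime N := by
      rw [hNq]
      have h1 : (1 + j * n').Coprime n' := by simp
      exact Nat.Coprime.mul_right (h1.coprime_dvd_right hqn) h1
    rw [← conj_sum s c hN hω u _ hcop hrel]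
    refine Finset.sum_congr rfl fun k hk => ?_
    rw [hu k hk]; ring
  have hsum : ∑ j ∈ Finset.range q, ∑ k ∈ s, (c k : K) * (η k * (η k ^ n') ^ j) = 0 :=
    Finset.sum_eq_zero fun j _ => hj j
  rw [Finset.sum_comm] at hsum
  have hq0 : (q : K) ≠ 0 := by exact_mod_cast hq.ne_zero
  have : ∑ k ∈ s, (q : K) * (if η k ^ n' = 1 then (c k : K) * η k else 0) = 0 := by
    refine Eq.trans ?_ hsum
    refine Finset.sum_congr rfl fun k hk => ?_
    have hx : (η k ^ n') ^ q = 1 := by rw [← pow_mul, mul_comm n' q, ← hNq, hη k hk]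
    rw [← Finset.mul_sum, ← Finset.mul_sum, geom_root hx]
    split_ifs <;> ring
  rw [← Finset.mul_sum, mul_eq_zero] at this
  rw [Finset.sum_filter]
  exact this.resolve_left hq0

lemma step_two_aux {ι : Type*} (s : Finset ι) (c : ι → ℚ) {N q n' j₀ : ℕ} (hN : 0 < N)
    (hq : q.Prime)
    (hNq : N = q * n') (hqn : ¬ q ∣ n') (hj0 : j₀ < q) (hj₀ : q ∣ 1 + j₀ * n')
    (η : ι → K) (hη : ∀ k ∈ s, η k ^ N = 1)
    [HasEnoughRootsOfUnity K N]
    (h : ∑ k ∈ s, (c k : K) * η k = 0) :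
    (q : K) * ∑ k ∈ s with η k ^ n' = 1, (c k : K) * η k =
      ∑ k ∈ s, (c k : K) * (η k * (η k ^ n') ^ j₀) := by
  classical
  obtain ⟨ω, hω⟩ := HasEnoughRootsOfUnity.exists_primitiveRoot K N
  have : NeZero N := ⟨hN.ne'⟩
  have hu : ∀ k, ∃ u : ℕ, k ∈ s → η k = ω ^ u := by
    intro k
    by_cases hk : k ∈ s
    · obtain ⟨i, -, hi⟩ := hω.eq_pow_of_pow_eq_one (hη k hk)
      exact ⟨i, fun _ => hi.symm⟩
    · exact ⟨0, fun h => absurd h hk⟩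
  choose u hu using hu
  have hrel : ∑ k ∈ s, (c k : K) * ω ^ (u k) = 0 := by
    rw [← h]; exact Finset.sum_congr rfl fun k hk => by rw [← hu k hk]
  have hj : ∀ j ∈ Finset.range q, j ≠ j₀ →
      ∑ k ∈ s, (c k : K) * (η k * (η k ^ n') ^ j) = 0 := by
    intro j hjr hjne
    have hcop : (1 + j * n').Coprime N := by
      rw [hNq]
      have h1 : (1 + j * n').Coprime n' := by simp
      refine Nat.Coprime.mul_right ?_ h1
      rw [Nat.coprime_comm, hq.coprime_iff_not_dvd]
      intro hd
      apply hjne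
      have hmod : (1 + j * n') ≡ (1 + j₀ * n') [MOD q] :=
        ((Nat.modEq_zero_iff_dvd).2 hd).trans ((Nat.modEq_zero_iff_dvd).2 hj₀).symm
      have hmod2 : j * n' ≡ j₀ * n' [MOD q] := Nat.ModEq.add_left_cancel' 1 hmod
      have hmod3 : j ≡ j₀ [MOD q] :=
        Nat.ModEq.cancel_right_of_coprime ((hq.coprime_iff_not_dvd).2 hqn) hmod2
      exact Nat.ModEq.eq_of_lt_of_lt hmod3 (Finset.mem_range.1 hjr) hj0
    rw [← conj_sum s c hN hω u _ hcop hrel]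
    refine Finset.sum_congr rfl fun k hk => ?_
    rw [hu k hk]; ring
  have hsum : ∑ j ∈ Finset.range q, ∑ k ∈ s, (c k : K) * (η k * (η k ^ n') ^ j) =
      ∑ k ∈ s, (c k : K) * (η k * (η k ^ n') ^ j₀) :=
    Finset.sum_eq_single_of_mem j₀ (Finset.mem_range.2 hj0) hj
  rw [← hsum, Finset.sum_comm, Finset.sum_filter, Finset.mul_sum]
  refine Finset.sum_congr rfl fun k hk => ?_
  have hx : (η k ^ n') ^ q = 1 := by rw [← pow_mul, mul_comm n' q, ← hNq, hη k hk]
  rw [← Finset.mul_sum, ← Finset.mul_sum, geom_root hx]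
  split_ifs <;> ring

lemma step_two {ι : Type*} (s : Finset ι) (c : ι → ℚ) {N q n' : ℕ} (hN : 0 < N) (hq : q.Prime)
    (hNq : N = q * n') (hqn : ¬ q ∣ n') (hs : s.card < q)
    (η : ι → K) (hη : ∀ k ∈ s, η k ^ N = 1)
    [HasEnoughRootsOfUnity K N]
    (h : ∑ k ∈ s, (c k : K) * η k = 0) :
    ∑ k ∈ s with η k ^ n' = 1, (c k : K) * η k = 0 := by
  classical
  obtain ⟨ω, hω⟩ := HasEnoughRootsOfUnity.exists_primitiveRoot K N
  have : NeZero N := ⟨hN.ne'⟩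
  have hω0 : ω ≠ 0 := hω.ne_zero hN.ne'
  have hχ : IsPrimitiveRoot (ω ^ n') q := hω.pow hN (by rw [hNq, mul_comm])
  -- `j₀`
  obtain ⟨j₀, hj0, hj₀⟩ : ∃ j₀ < q, q ∣ 1 + j₀ * n' := by
    have hcop : Nat.Coprime n' q := (((hq.coprime_iff_not_dvd).2 hqn)).symm
    have : Fact q.Prime := ⟨hq⟩
    have hn0 : (n' : ZMod q) ≠ 0 := by
      rw [Ne, ZMod.natCast_eq_zero_iff]; exact hqn
    refine ⟨(-(n' : ZMod q)⁻¹).val, ZMod.val_lt _, ?_⟩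
    rw [← ZMod.natCast_eq_zero_iff]
    push_cast
    rw [ZMod.natCast_zmod_val]
    field_simp
    ring
  -- avoid a value
  obtain ⟨i, hi, hav⟩ : ∃ i ∈ Finset.range q, ∀ k ∈ s, η k ^ n' ≠ (ω ^ n') ^ i := by
    by_contra hcon
    push Not at hcon
    have hsub : (Finset.range q).image (fun i => (ω ^ n') ^ i) ⊆ s.image (fun k => η k ^ n') := by
      intro y hy
      obtain ⟨i, hi, rfl⟩ := Finset.mem_image.1 hy
      obtain ⟨k, hk, hk2⟩ := hcon i hi
      exact Finset.mem_image.2 ⟨k, hk, hk2⟩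
    have h1 := Finset.card_le_card hsub
    rw [Finset.card_image_of_injOn, Finset.card_range] at h1
    · exact absurd (h1.trans Finset.card_image_le) (not_le.2 hs)
    · intro a ha b hb hab
      exact hχ.pow_inj (Finset.mem_range.1 (Finset.mem_coe.1 ha))
        (Finset.mem_range.1 (Finset.mem_coe.1 hb)) hab
  set τ : K := (ω ^ i)⁻¹ with hτ
  have hτ0 : τ ≠ 0 := inv_ne_zero (pow_ne_zero _ hω0)
  have hτN : τ ^ N = 1 := by
    rw [hτ, inv_pow, ← pow_mul, mul_comm, pow_mul, hω.pow_eq_one, one_pow, inv_one]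
  have key := step_two_aux s c hN hq hNq hqn hj0 hj₀ η hη h
  have key2 := step_two_aux s c hN hq hNq hqn hj0 hj₀ (fun k => η k * τ)
    (fun k hk => by rw [mul_pow, hη k hk, hτN, one_mul]) (by
      have : ∑ k ∈ s, (c k : K) * (η k * τ) = (∑ k ∈ s, (c k : K) * η k) * τ := by
        rw [Finset.sum_mul]; exact Finset.sum_congr rfl fun k _ => by ring
      rw [this, h, zero_mul])
  have hemp : ({k ∈ s | (η k * τ) ^ n' = 1} : Finset ι) = ∅ := by
    rw [Finset.filter_eq_empty_iff]
    intro k hk hk2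
    apply hav k hk
    rw [mul_pow, hτ, inv_pow, mul_inv_eq_one₀ (pow_ne_zero _ (pow_ne_zero _ hω0))] at hk2
    rw [hk2, ← pow_mul, ← pow_mul, mul_comm]
  rw [hemp, Finset.sum_empty, mul_zero] at key2
  have key3 : ∑ k ∈ s, (c k : K) * (η k * τ * ((η k * τ) ^ n') ^ j₀) =
      (∑ k ∈ s, (c k : K) * (η k * (η k ^ n') ^ j₀)) * (τ * (τ ^ n') ^ j₀) := by
    rw [Finset.sum_mul]; exact Finset.sum_congr rfl fun k _ => by ring
  rw [key3] at key2
  have key4 := (mul_eq_zero.1 key2.symm).resolve_right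
    (mul_ne_zero hτ0 (pow_ne_zero _ (pow_ne_zero _ hτ0)))
  rw [key4] at key
  exact (mul_eq_zero.1 key).resolve_left (by exact_mod_cast hq.ne_zero)

/-- A Mann-type splitting: a rational relation between `m` roots of unity splits along the
cosets of `μ_{m!}`. -/
lemma mann_split [IsAlgClosed K] {ι : Type*} (m : ℕ) (c : ι → ℚ) (η : ι → K) (N : ℕ) :
    0 < N → ∀ s : Finset ι, s.card ≤ m → (∀ k ∈ s, η k ≠ 0) →
      ∀ k₀ ∈ s, (∀ k ∈ s, η k ^ N = η k₀ ^ N) → ∑ k ∈ s, (c k : K) * η k = 0 →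
      ∑ k ∈ s with η k ^ m.factorial = η k₀ ^ m.factorial, (c k : K) * η k = 0 := by
  classical
  induction N using Nat.strong_induction_on with
  | _ N ih =>
  intro hN s hs hne k₀ hk₀ hη h
  by_cases hdvd : N ∣ m.factorial
  · have : ({k ∈ s | η k ^ m.factorial = η k₀ ^ m.factorial} : Finset ι) = s := by
      rw [Finset.filter_eq_self]
      intro k hk
      obtain ⟨d, hd⟩ := hdvd
      rw [hd, pow_mul, pow_mul, hη k hk]
    rw [this, h]
  · have hf0 : m.factorial ≠ 0 := m.factorial_ne_zero
    obtain ⟨q, hq, hlt⟩ : ∃ q, q.Prime ∧ m.factorial.factorization q < N.factorization q := by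
      by_contra hcon
      push Not at hcon
      apply hdvd
      rw [← Nat.factorization_le_iff_dvd hN.ne' hf0]
      intro q
      by_cases hq : q.Prime
      · exact hcon q hq
      · simp [Nat.factorization_eq_zero_of_not_prime _ hq]
    have hqN : q ∣ N := Nat.dvd_of_factorization_pos (by omega)
    obtain ⟨n', hn'⟩ := hqN
    have hn'0 : 0 < n' := by
      rcases Nat.eq_zero_or_pos n' with h0 | h0
      · subst h0; omega
      · exact h0
    have hn'N : n' < N := by
      rw [hn']; exact lt_mul_of_one_lt_left hn'0 hq.one_lt
    have hk00 := hne k₀ hk₀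
    have hη' : ∀ k ∈ s, (η k / η k₀) ^ N = 1 := fun k hk => by
      rw [div_pow, hη k hk, div_self (pow_ne_zero _ hk00)]
    have h' : ∑ k ∈ s, (c k : K) * (η k / η k₀) = 0 := by
      have : ∑ k ∈ s, (c k : K) * (η k / η k₀) = (∑ k ∈ s, (c k : K) * η k) / η k₀ := by
        rw [Finset.sum_div]; exact Finset.sum_congr rfl fun k _ => by ring
      rw [this, h, zero_div]
    have : NeZero (N : K) := ⟨by exact_mod_cast hN.ne'⟩
    have : NeZero N := ⟨hN.ne'⟩
    have : HasEnoughRootsOfUnity K N := inferInstance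
    have hstep : ∑ k ∈ s with (η k / η k₀) ^ n' = 1, (c k : K) * (η k / η k₀) = 0 := by
      by_cases hqn : q ∣ n'
      · exact step_one s c hN hq hn' hqn _ hη' h'
      · refine step_two s c hN hq hn' hqn ?_ _ hη' h'
        by_contra hle
        push Not at hle
        have h1 : q ∣ m.factorial := (hq.dvd_factorial).2 (hle.trans hs)
        have h2 : 0 < m.factorial.factorization q := hq.factorization_pos_of_dvd hf0 h1
        have h3 : N.factorization q = 1 := by
          rw [hn', Nat.factorization_mul hq.ne_zero hn'0.ne']
          simp [hq.factorization_self, Nat.factorization_eq_zero_of_not_dvd hqn]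
        omega
    have hfil : ({k ∈ s | (η k / η k₀) ^ n' = 1} : Finset ι) =
        ({k ∈ s | η k ^ n' = η k₀ ^ n'} : Finset ι) := by
      refine Finset.filter_congr fun k hk => ?_
      rw [div_pow, div_eq_one_iff_eq (pow_ne_zero _ hk00)]
    rw [hfil] at hstep
    have hstep2 : ∑ k ∈ s with η k ^ n' = η k₀ ^ n', (c k : K) * η k = 0 := by
      have : ∑ k ∈ s with η k ^ n' = η k₀ ^ n', (c k : K) * (η k / η k₀) =
        (∑ k ∈ s with η k ^ n' = η k₀ ^ n', (c k : K) * η k) / η k₀ := by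
        rw [Finset.sum_div]; exact Finset.sum_congr rfl fun k _ => by ring
      rw [this] at hstep
      exact (div_eq_zero_iff.1 hstep).resolve_right hk00
    have hI := ih n' hn'N hn'0 {k ∈ s | η k ^ n' = η k₀ ^ n'}
      ((Finset.card_filter_le _ _).trans hs) (fun k hk => hne k (Finset.mem_filter.1 hk).1) k₀
      (Finset.mem_filter.2 ⟨hk₀, rfl⟩) (fun k hk => (Finset.mem_filter.1 hk).2) hstep2
    rw [← hI]
    refine Finset.sum_congr ?_ fun _ _ => rfl
    ext k
    simp only [Finset.mem_filter]
    constructor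
    · rintro ⟨hk, hkP⟩
      refine ⟨⟨hk, ?_⟩, hkP⟩
      have e1 : (η k / η k₀) ^ m.factorial = 1 := by
        rw [div_pow, hkP, div_self (pow_ne_zero _ hk00)]
      have e2 := hη' k hk
      have e3 : (η k / η k₀) ^ (Nat.gcd m.factorial N) = 1 := pow_gcd_eq_one.2 ⟨e1, e2⟩
      have hg : Nat.gcd m.factorial N ∣ n' := by
        rw [← Nat.factorization_le_iff_dvd (Nat.gcd_pos_of_pos_right _ hN).ne' hn'0.ne']
        intro r
        rw [Nat.factorization_gcd hf0 hN.ne', Finsupp.inf_apply]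
        by_cases hr : r = q
        · subst hr
          have : N.factorization r = 1 + n'.factorization r := by
            rw [hn', Nat.factorization_mul hq.ne_zero hn'0.ne']
            simp [hq.factorization_self]
          refine (min_le_left _ _).trans ?_
          omega
        · have : N.factorization r = n'.factorization r := by
            rw [hn', Nat.factorization_mul hq.ne_zero hn'0.ne']
            simp [hq.factorization, Ne.symm hr]
          rw [← this]
          exact min_le_right _ _
      obtain ⟨d, hd⟩ := hg
      have e4 : (η k / η k₀) ^ n' = 1 := by rw [hd, pow_mul, e3, one_pow]
      rwa [div_pow, div_eq_one_iff_eq (pow_ne_zero _ hk00)] at e4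
    · rintro ⟨⟨hk, -⟩, hkP⟩
      exact ⟨hk, hkP⟩

end PartOne

section PartTwo
variable {K : Type*} [Field K] [CharZero K] [IsAlgClosed K]

/-- Elements of `K` which are rational combinations of roots of unity form a field. -/
lemma cyclo_field : ∃ E : IntermediateField ℚ K, ∀ x : K, (x ∈ E ↔
    x ∈ Submodule.span ℚ {x : K | ∃ n : ℕ, 0 < n ∧ x ^ n = 1}) := by
  set S : Set K := {x : K | ∃ n : ℕ, 0 < n ∧ x ^ n = 1} with hS
  refine ⟨IntermediateField.adjoin ℚ S, fun x => ?_⟩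
  have halg : ∀ x ∈ S, IsAlgebraic ℚ x := by
    rintro x ⟨n, hn, hx⟩
    refine IsIntegral.isAlgebraic ?_
    refine IsIntegral.of_pow hn ?_
    rw [hx]; exact isIntegral_one
  have h1 := IntermediateField.adjoin_toSubalgebra_of_isAlgebraic (F := ℚ) halg
  rw [← IntermediateField.mem_toSubalgebra, h1, ← Subalgebra.mem_toSubmodule,
    Algebra.adjoin_eq_span]
  have hcl : (Submonoid.closure S : Set K) = S := by
    let M : Submonoid K :=
      { carrier := S
        one_mem' := ⟨1, one_pos, one_pow 1⟩
        mul_mem' := by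
          rintro a b ⟨n, hn, ha⟩ ⟨m, hm, hb⟩
          refine ⟨n * m, Nat.mul_pos hn hm, ?_⟩
          rw [mul_pow, pow_mul, ha, one_pow, mul_comm n m, pow_mul, hb, one_pow, one_mul] }
    have : Submonoid.closure (M : Set K) = M := Submonoid.closure_eq M
    exact congrArg (fun T : Submonoid K => (T : Set K)) this
  rw [hcl]

/-- Exact vanishing (Manin-Mumford for linear forms). -/
lemma exact_MM {ι : Type*} [Fintype ι] (b : ι → K) (i₁ : ι) (hb : b i₁ ≠ 0) :
    ∃ B : ℕ, 0 < B ∧ ∀ ζ : ι → K, (∀ i, ∃ n : ℕ, 0 < n ∧ ζ i ^ n = 1) →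
      ∑ i, b i * ζ i = 0 → ∃ i j, i ≠ j ∧ ζ i ^ B = ζ j ^ B := by
  classical
  obtain ⟨E, hE⟩ := cyclo_field (K := K)
  -- a functional
  obtain ⟨f, hf⟩ : ∃ f : K →ₗ[E] E, f (b i₁) ≠ 0 := by
    by_contra hcon
    push Not at hcon
    exact hb ((Module.forall_dual_apply_eq_zero_iff E (b i₁)).1 hcon)
  have hrep : ∀ i, ∃ l : K →₀ ℚ, (∀ w ∈ l.support, ∃ n : ℕ, 0 < n ∧ w ^ n = 1) ∧
      ∑ w ∈ l.support, (l w : K) * w = (f (b i) : K) := by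
    intro i
    have := (hE _).1 (f (b i)).2
    rw [Finsupp.mem_span_iff_linearCombination] at this
    obtain ⟨l, hl⟩ := this
    refine ⟨l.mapDomain Subtype.val, ?_, ?_⟩
    · intro w hw
      have := Finsupp.mapDomain_support hw
      obtain ⟨w', -, rfl⟩ := Finset.mem_image.1 this
      exact w'.2
    · rw [← hl, Finsupp.linearCombination_apply]
      have : ∑ w ∈ (l.mapDomain Subtype.val).support, ((l.mapDomain Subtype.val) w : K) * w =
        (l.mapDomain Subtype.val).sum (fun w r => (r : K) * w) := rfl
      rw [this, Finsupp.sum_mapDomain_index (by simp) (by intros; push_cast; ring)]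
      refine Finsupp.sum_congr fun w _ => ?_
      rw [Algebra.smul_def]; rfl
  choose l hl1 hl2 using hrep
  set s : Finset (ι × K) := Finset.univ.biUnion fun i => (l i).support.image fun w => (i, w)
    with hs
  have hmem : ∀ i w, (i, w) ∈ s ↔ w ∈ (l i).support := by
    intro i w
    simp [hs]
  have hord : ∃ W : ℕ, 0 < W ∧ ∀ k ∈ s, k.2 ^ W = 1 := by
    have : ∀ k : ι × K, ∃ n : ℕ, 0 < n ∧ (k ∈ s → k.2 ^ n = 1) := by
      rintro ⟨i, w⟩
      by_cases h : (i, w) ∈ s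
      · obtain ⟨n, hn, hw⟩ := hl1 i w ((hmem i w).1 h)
        exact ⟨n, hn, fun _ => hw⟩
      · exact ⟨1, one_pos, fun h' => absurd h' h⟩
    choose n hn hn2 using this
    refine ⟨∏ k ∈ s, n k, Finset.prod_pos fun k _ => hn k, fun k hk => ?_⟩
    obtain ⟨d, hd⟩ := Finset.dvd_prod_of_mem n hk
    rw [hd, pow_mul, hn2 k hk, one_pow]
  obtain ⟨W, hW, hWs⟩ := hord
  set m := s.card with hm
  refine ⟨m.factorial * W, Nat.mul_pos m.factorial_pos hW, fun ζ hζ hsum => ?_⟩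
  by_contra hcon
  push Not at hcon
  choose ord hord hζ1 using hζ
  have hζ0 : ∀ i, ζ i ≠ 0 := by
    intro i h0
    have := hζ1 i
    rw [h0, zero_pow (hord i).ne'] at this
    exact zero_ne_one this
  have hs0 : ∀ k ∈ s, k.2 ≠ 0 := by
    intro k hk h0
    have := hWs k hk
    rw [h0, zero_pow hW.ne'] at this
    exact zero_ne_one this
  set η : ι × K → K := fun k => k.2 * ζ k.1 with hη
  set c : ι × K → ℚ := fun k => l k.1 k.2 with hc
  have hζE : ∀ i, ζ i ∈ E := fun i =>
    (hE _).2 (Submodule.subset_span ⟨ord i, hord i, hζ1 i⟩)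
  have hbeta : ∑ i, (f (b i) : K) * ζ i = 0 := by
    have h1 : f (∑ i, b i * ζ i) = ∑ i, (⟨ζ i, hζE i⟩ : E) * f (b i) := by
      rw [map_sum]
      refine Finset.sum_congr rfl fun i _ => ?_
      have : b i * ζ i = (⟨ζ i, hζE i⟩ : E) • b i := by
        rw [mul_comm]; rfl
      rw [this, map_smul, smul_eq_mul]
    rw [hsum, map_zero] at h1
    have h2 := congrArg (fun x : E => (x : K)) h1
    simp only [ZeroMemClass.coe_zero, AddSubmonoidClass.coe_finset_sum, MulMemClass.coe_mul] at h2
    rw [h2]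
    exact Finset.sum_congr rfl fun i _ => mul_comm _ _
  -- partial sums
  have hpart : ∀ i, ∑ k ∈ s with k.1 = i, (c k : K) * η k = (f (b i) : K) * ζ i := by
    intro i
    have : ({k ∈ s | k.1 = i} : Finset (ι × K)) = (l i).support.image fun w => (i, w) := by
      ext ⟨j, w⟩
      simp only [Finset.mem_filter, hmem, Finset.mem_image, Prod.mk.injEq]
      constructor
      · rintro ⟨h1, rfl⟩; exact ⟨w, h1, rfl, rfl⟩
      · rintro ⟨w', h1, rfl, rfl⟩; exact ⟨h1, rfl⟩
    rw [this, Finset.sum_image (by intro a _ b _ h; exact (Prod.mk.inj h).2), ← hl2 i,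
      Finset.sum_mul]
    exact Finset.sum_congr rfl fun w _ => by simp only [hη, hc]; ring
  have htot : ∑ k ∈ s, (c k : K) * η k = 0 := by
    rw [← hbeta, ← Finset.sum_fiberwise s (fun k => k.1)]
    exact Finset.sum_congr rfl fun i _ => hpart i
  have hη0 : ∀ k ∈ s, η k ≠ 0 := fun k hk => mul_ne_zero (hs0 k hk) (hζ0 _)
  set N := W * ∏ i, ord i with hN
  have hN0 : 0 < N := Nat.mul_pos hW (Finset.prod_pos fun i _ => hord i)
  have hηN : ∀ k ∈ s, η k ^ N = 1 := by
    intro k hk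
    obtain ⟨d, hd⟩ := Finset.dvd_prod_of_mem ord (Finset.mem_univ k.1)
    simp only [hη]
    rw [mul_pow, hN, pow_mul, hWs k hk, one_pow, one_mul, hd, mul_comm, mul_assoc, pow_mul, hζ1,
      one_pow]
  have hclass : ∀ k₀ ∈ s,
      ∑ k ∈ s with η k ^ m.factorial = η k₀ ^ m.factorial, (c k : K) * η k = 0 := by
    intro k₀ hk₀
    exact mann_split m c η N hN0 s le_rfl hη0 k₀ hk₀
      (fun k hk => by rw [hηN k hk, hηN k₀ hk₀]) htot
  have hsame : ∀ k ∈ s, ∀ k' ∈ s, η k ^ m.factorial = η k' ^ m.factorial → k.1 = k'.1 := by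
    intro k hk k' hk' h
    by_contra hne
    apply hcon _ _ hne
    have h2 := congrArg (fun x => x ^ W) h
    simp only [hη] at h2
    rw [mul_pow, mul_pow, mul_pow, mul_pow, ← pow_mul k.2, ← pow_mul k'.2, mul_comm _ W, pow_mul,
      pow_mul, hWs k hk, hWs k' hk', one_pow, one_mul, one_mul, ← pow_mul, ← pow_mul] at h2
    exact h2
  have hzero : ∑ k ∈ s with k.1 = i₁, (c k : K) * η k = 0 := by
    rw [← Finset.sum_fiberwise_of_maps_to (t := ({k ∈ s | k.1 = i₁} : Finset (ι × K)).image
      fun k => η k ^ m.factorial) (g := fun k => η k ^ m.factorial)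
      (fun k hk => Finset.mem_image_of_mem _ hk)]
    refine Finset.sum_eq_zero fun v hv => ?_
    obtain ⟨k₀, hk₀, rfl⟩ := Finset.mem_image.1 hv
    obtain ⟨hk₀s, hk₀i⟩ := Finset.mem_filter.1 hk₀
    rw [← hclass k₀ hk₀s]
    refine Finset.sum_congr ?_ fun _ _ => rfl
    ext k
    simp only [Finset.mem_filter]
    constructor
    · rintro ⟨⟨h1, -⟩, h3⟩; exact ⟨h1, h3⟩
    · rintro ⟨h1, h3⟩; exact ⟨⟨h1, (hsame k h1 k₀ hk₀s h3).trans hk₀i⟩, h3⟩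
  rw [hpart] at hzero
  rcases mul_eq_zero.1 hzero with h | h
  · exact hf (by exact_mod_cast h)
  · exact hζ0 _ h
end PartTwo

set_option linter.unusedSectionVars false
set_option linter.style.haveILetI false
section PartThree
variable {K : Type*} [NontriviallyNormedField K] [IsUltrametricDist K]

lemma norm_root_one {x : K} {n : ℕ} (hn : 0 < n) (hx : x ^ n = 1) : ‖x‖ = 1 := by
  have : ‖x‖ ^ n = 1 := by rw [← norm_pow, hx, norm_one]
  exact (pow_eq_one_iff_of_nonneg (norm_nonneg _) hn.ne').1 this

lemma norm_sum_le_bd {ι : Type*} (s : Finset ι) (f : ι → K) {C : ℝ} (hC : 0 ≤ C)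
    (h : ∀ i ∈ s, ‖f i‖ ≤ C) : ‖∑ i ∈ s, f i‖ ≤ C :=
  IsUltrametricDist.norm_sum_le_of_forall_le_of_nonneg hC h

lemma norm_sum_lt_bd {ι : Type*} (s : Finset ι) (f : ι → K) {C : ℝ} (hC : 0 < C)
    (h : ∀ i ∈ s, ‖f i‖ < C) : ‖∑ i ∈ s, f i‖ < C := by
  rcases s.eq_empty_or_nonempty with rfl | hs
  · simpa using hC
  · obtain ⟨i, hi, hle⟩ := IsUltrametricDist.exists_norm_finsetSum_le_of_nonempty hs f
    exact hle.trans_lt (h i hi)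

lemma norm_aeval_le_one {ι : Type*} (x : ι → K) (hx : ∀ i, ‖x i‖ ≤ 1) (g : MvPolynomial ι ℤ) :
    ‖MvPolynomial.aeval x g‖ ≤ 1 := by
  induction g using MvPolynomial.induction_on with
  | C a => simpa using IsUltrametricDist.norm_intCast_le_one K a
  | add p q hp hq =>
    rw [map_add]
    exact (IsUltrametricDist.norm_add_le_max _ _).trans (max_le hp hq)
  | mul_X p i hp =>
    rw [map_mul, norm_mul, MvPolynomial.aeval_X]
    exact mul_le_one₀ hp (norm_nonneg _) (hx i)

/-- Witt polynomials for a linear form. -/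
lemma witt_polys {ι : Type*} [Fintype ι] {p : ℕ} (hp : p.Prime) (c : ι → ℤ) :
    ∃ f : ℕ → MvPolynomial ι ℤ, ∀ n, ∑ i, (c i : MvPolynomial ι ℤ) * MvPolynomial.X i ^ p ^ n =
      ∑ j ∈ Finset.range (n + 1), (p : MvPolynomial ι ℤ) ^ j * f j ^ p ^ (n - j) := by
  haveI : Fact p.Prime := ⟨hp⟩
  let w : WittVector p (MvPolynomial ι ℤ) :=
    ∑ i, (c i : WittVector p (MvPolynomial ι ℤ)) * WittVector.teichmuller p (MvPolynomial.X i)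
  refine ⟨fun j => w.coeff j, fun n => ?_⟩
  have h1 : WittVector.ghostComponent n w =
      ∑ i, (c i : MvPolynomial ι ℤ) * MvPolynomial.X i ^ p ^ n := by
    simp only [w, map_sum, map_mul, map_intCast, WittVector.ghostComponent_teichmuller]
  rw [← h1, WittVector.ghostComponent_apply, aeval_wittPolynomial]

/-- Lemma A. -/
lemma lemmaA {ι : Type*} [Fintype ι] {p : ℕ} (hp : p.Prime) (hpnorm : ‖(p : K)‖ = (p : ℝ)⁻¹)
    (c : ι → ℤ) : ∃ N₀ : ℕ, ∀ (x : ι → K) (r : ℕ), 0 < r → (∀ i, x i ^ p ^ r = x i) →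
      (∑ i, (c i : K) * x i = 0 ∨ ∃ j < N₀, ‖∑ i, (c i : K) * x i‖ = ((p : ℝ)⁻¹) ^ j) := by
  classical
  obtain ⟨f, hf⟩ := witt_polys hp c
  have hp1 : (1 : ℝ) < p := by exact_mod_cast hp.one_lt
  have hpi0 : (0 : ℝ) < (p : ℝ)⁻¹ := by positivity
  have hpi1 : (p : ℝ)⁻¹ < 1 := inv_lt_one_of_one_lt₀ hp1
  -- noetherian
  obtain ⟨N₀, hN₀⟩ : ∃ N₀ : ℕ, ∀ j, f j ∈ Ideal.span (f '' Set.Iio N₀) := by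
    let I : ℕ →o Ideal (MvPolynomial ι ℤ) :=
      ⟨fun n => Ideal.span (f '' Set.Iio n), fun a b hab =>
        Ideal.span_mono (Set.image_mono (Set.Iio_subset_Iio hab))⟩
    obtain ⟨N₀, hN₀⟩ := monotone_stabilizes_iff_noetherian.mpr
      (inferInstance : IsNoetherian (MvPolynomial ι ℤ) (MvPolynomial ι ℤ)) I
    refine ⟨N₀, fun j => ?_⟩
    have h1 : f j ∈ I (max (j + 1) N₀) :=
      Ideal.subset_span ⟨j, Set.mem_Iio.2 (by omega), rfl⟩
    rw [← hN₀ _ (le_max_right _ _)] at h1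
    exact h1
  refine ⟨N₀, fun x r hr hx => ?_⟩
  have hx1 : ∀ i, ‖x i‖ ≤ 1 := by
    intro i
    by_cases h0 : x i = 0
    · simp [h0]
    · have hpr : 1 < p ^ r := Nat.one_lt_pow hr.ne' hp.one_lt
      have h1 : x i ^ (p ^ r - 1) = 1 := by
        have h2 : x i ^ (p ^ r - 1) * x i = 1 * x i := by
          rw [← pow_succ, Nat.sub_add_cancel hpr.le, one_mul, hx i]
        exact mul_right_cancel₀ h0 h2
      exact (norm_root_one (by omega) h1).le
  set F : ℕ → K := fun j => MvPolynomial.aeval x (f j) with hF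
  set s : K := ∑ i, (c i : K) * x i with hs
  have hF1 : ∀ j, ‖F j‖ ≤ 1 := fun j => norm_aeval_le_one x hx1 _
  have hid : ∀ n, ∑ i, (c i : K) * x i ^ p ^ n =
      ∑ j ∈ Finset.range (n + 1), (p : K) ^ j * F j ^ p ^ (n - j) := by
    intro n
    have := congrArg (MvPolynomial.aeval x) (hf n)
    simpa [map_sum] using this
  have hper : ∀ n i, x i ^ p ^ (r * n) = x i := by
    intro n i
    induction n with
    | zero => simp
    | succ n ih => rw [mul_add, mul_one, pow_add, pow_mul, ih, hx i]
  have hids : ∀ n, s = ∑ j ∈ Finset.range (r * n + 1), (p : K) ^ j * F j ^ p ^ (r * n - j) := by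
    intro n
    rw [← hid, hs]
    exact Finset.sum_congr rfl fun i _ => by rw [hper]
  have hall : (∀ l < N₀, ‖F l‖ < 1) → ∀ j, ‖F j‖ < 1 := by
    intro h j
    have := hN₀ j
    refine Submodule.span_induction (p := fun g _ => ‖MvPolynomial.aeval x g‖ < 1)
      ?_ ?_ ?_ ?_ this
    · rintro g ⟨l, hl, rfl⟩
      exact h l hl
    · simp
    · intro a b _ _ ha hb
      rw [map_add]
      exact (IsUltrametricDist.norm_add_le_max _ _).trans_lt (max_lt ha hb)
    · intro a b _ hb
      rw [smul_eq_mul, map_mul, norm_mul]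
      exact (mul_le_of_le_one_left (norm_nonneg _) (norm_aeval_le_one x hx1 _)).trans_lt hb
  -- approximation
  have happ : ∀ J, (∀ j < J, ‖F j‖ < 1) → ∃ k : ℕ,
      ‖s - (p : K) ^ J * F J ^ k‖ < ((p : ℝ)⁻¹) ^ J := by
    intro J hJ
    have hpos : 0 < ((p : ℝ)⁻¹) ^ J := by positivity
    have hev : ∀ j < J, ∀ᶠ n : ℕ in Filter.atTop, ‖F j‖ ^ p ^ (r * n - j) < ((p : ℝ)⁻¹) ^ J := by
      intro j hj
      have ht : Filter.Tendsto (fun n : ℕ => p ^ (r * n - j)) Filter.atTop Filter.atTop := by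
        refine (tendsto_pow_atTop_atTop_of_one_lt hp.one_lt).comp ?_
        refine Filter.tendsto_atTop_mono' _ ?_ (Filter.tendsto_sub_atTop_nat j)
        filter_upwards with n
        have : n ≤ r * n := Nat.le_mul_of_pos_left n hr
        omega
      have ht2 := (tendsto_pow_atTop_nhds_zero_of_lt_one (norm_nonneg _) (hJ j hj)).comp ht
      exact ht2.eventually_lt_const hpos
    have hev2 : ∀ᶠ n : ℕ in Filter.atTop, ∀ j ∈ Finset.range J,
        ‖F j‖ ^ p ^ (r * n - j) < ((p : ℝ)⁻¹) ^ J := by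
      rw [Filter.eventually_all_finset]
      intro j hj
      exact hev j (Finset.mem_range.1 hj)
    obtain ⟨n, hn, hnJ⟩ := (hev2.and (Filter.eventually_ge_atTop J)).exists
    have hJn : J ≤ r * n := hnJ.trans (Nat.le_mul_of_pos_left n hr)
    refine ⟨p ^ (r * n - J), ?_⟩
    rw [hids n, ← Finset.sum_erase_eq_sub (Finset.mem_range.2 (by omega))]
    refine norm_sum_lt_bd _ _ hpos fun j hj => ?_
    rw [norm_mul, norm_pow, norm_pow, hpnorm]
    obtain ⟨hjne, -⟩ := Finset.mem_erase.1 hj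
    rcases lt_or_gt_of_ne hjne with hlt | hgt
    · have h1 : ((p : ℝ)⁻¹) ^ j ≤ 1 := pow_le_one₀ hpi0.le hpi1.le
      exact (mul_le_of_le_one_left (by positivity) h1).trans_lt (hn j (Finset.mem_range.2 hlt))
    · have h1 : ‖F j‖ ^ p ^ (r * n - j) ≤ 1 := pow_le_one₀ (norm_nonneg _) (hF1 j)
      exact (mul_le_of_le_one_right (by positivity) h1).trans_lt
        (pow_lt_pow_right_of_lt_one₀ hpi0 hpi1 hgt)
  by_cases hex : ∃ j, ‖F j‖ = 1
  · right
    have hj1 := Nat.find_spec hex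
    set j₀ := Nat.find hex with hj₀
    have hmin : ∀ j < j₀, ‖F j‖ < 1 := fun j hj =>
      lt_of_le_of_ne (hF1 j) (Nat.find_min hex hj)
    refine ⟨j₀, ?_, ?_⟩
    · by_contra hge
      push Not at hge
      have := hall (fun l hl => hmin l (hl.trans_le hge)) j₀
      exact absurd hj1 this.ne
    · obtain ⟨k, hk⟩ := happ j₀ hmin
      have h2 : ‖(p : K) ^ j₀ * F j₀ ^ k‖ = ((p : ℝ)⁻¹) ^ j₀ := by
        rw [norm_mul, norm_pow, norm_pow, hpnorm, hj1, one_pow, mul_one]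
      have h3 : s = (s - (p : K) ^ j₀ * F j₀ ^ k) + (p : K) ^ j₀ * F j₀ ^ k := by ring
      rw [h3, IsUltrametricDist.norm_add_eq_max_of_norm_ne_norm (by rw [h2]; exact hk.ne), h2,
        max_eq_right hk.le]
  · left
    push Not at hex
    have hlt : ∀ j, ‖F j‖ < 1 := fun j => lt_of_le_of_ne (hF1 j) (hex j)
    have hle : ∀ J, ‖s‖ ≤ ((p : ℝ)⁻¹) ^ J := by
      intro J
      obtain ⟨k, hk⟩ := happ J (fun j _ => hlt j)
      have h2 : ‖(p : K) ^ J * F J ^ k‖ ≤ ((p : ℝ)⁻¹) ^ J := by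
        rw [norm_mul, norm_pow, norm_pow, hpnorm]
        exact mul_le_of_le_one_right (by positivity) (pow_le_one₀ (norm_nonneg _) (hF1 J))
      have h3 : s = (s - (p : K) ^ J * F J ^ k) + (p : K) ^ J * F J ^ k := by ring
      rw [h3]
      exact (IsUltrametricDist.norm_add_le_max _ _).trans (max_le hk.le h2)
    have := ge_of_tendsto' (tendsto_pow_atTop_nhds_zero_of_lt_one hpi0.le hpi1) hle
    exact norm_le_zero_iff.1 this

lemma norm_pow_sub_one_le {ω : K} (hω : ‖ω‖ ≤ 1) (a : ℕ) : ‖ω ^ a - 1‖ ≤ ‖ω - 1‖ := by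
  rw [← geom_sum_mul, norm_mul]
  refine mul_le_of_le_one_left (norm_nonneg _) (norm_sum_le_bd _ _ zero_le_one fun i _ => ?_)
  rw [norm_pow]; exact pow_le_one₀ (norm_nonneg _) hω

lemma norm_pi {p : ℕ} (hp : p.Prime) (hpnorm : ‖(p : K)‖ = (p : ℝ)⁻¹) (k : ℕ) {ω : K}
    (hω : IsPrimitiveRoot ω (p ^ (k + 1))) :
    ‖ω - 1‖ ^ (p ^ (k + 1)).totient = (p : ℝ)⁻¹ := by
  haveI : Fact p.Prime := ⟨hp⟩
  have hpos : 0 < p ^ (k + 1) := pow_pos hp.pos _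
  haveI : NeZero (p ^ (k + 1)) := ⟨hpos.ne'⟩
  have h1 := Polynomial.eval_one_cyclotomic_prime_pow (R := K) (p := p) k
  rw [Polynomial.cyclotomic_eq_prod_X_sub_primitiveRoots hω, Polynomial.eval_prod] at h1
  have h2 := congrArg norm h1
  rw [hpnorm, norm_prod] at h2
  rw [← h2, ← hω.card_primitiveRoots, ← Finset.prod_const]
  refine Finset.prod_congr rfl fun μ hμ => ?_
  have hμ' : IsPrimitiveRoot μ (p ^ (k + 1)) := (mem_primitiveRoots hpos).1 hμ
  rw [Polynomial.eval_sub, Polynomial.eval_X, Polynomial.eval_C, norm_sub_rev 1 μ]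
  obtain ⟨i, -, hi⟩ := hω.eq_pow_of_pow_eq_one hμ'.pow_eq_one
  obtain ⟨j, -, hj⟩ := hμ'.eq_pow_of_pow_eq_one hω.pow_eq_one
  apply le_antisymm
  · rw [← hj]; exact norm_pow_sub_one_le (norm_root_one hpos hμ'.pow_eq_one).le _
  · rw [← hi]; exact norm_pow_sub_one_le (norm_root_one hpos hω.pow_eq_one).le _

lemma taylor_coeff_sum (P : Polynomial K) (r : K) (n d : ℕ) (hd : P.natDegree < d) :
    (Polynomial.taylor r P).coeff n =
      ∑ l ∈ Finset.range d, P.coeff l * (r ^ (l - n) * (l.choose n : K)) := by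
  conv_lhs => rw [P.as_sum_range' d hd]
  rw [map_sum, Polynomial.finsetSum_coeff]
  refine Finset.sum_congr rfl fun l _ => ?_
  rw [Polynomial.taylor_monomial, Polynomial.coeff_C_mul, Polynomial.coeff_X_add_C_pow]

lemma pi_expansion {p : ℕ} (hp : p.Prime) {φ : ℕ} (hφ : 0 < φ) {π : K}
    (hπ : ‖π‖ ^ φ = (p : ℝ)⁻¹) (P : Polynomial K) (hP : P.natDegree < φ)
    (hval : ∀ l, (Polynomial.taylor 1 P).coeff l = 0 ∨
      ∃ v : ℕ, ‖(Polynomial.taylor 1 P).coeff l‖ = ((p : ℝ)⁻¹) ^ v) (j : ℕ) :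
    ‖P.coeff j‖ ≤ p * ‖P.eval (π + 1)‖ := by
  classical
  have hp1 : (1 : ℝ) < p := by exact_mod_cast hp.one_lt
  have hpi0 : (0 : ℝ) < (p : ℝ)⁻¹ := by positivity
  have hpi1 : (p : ℝ)⁻¹ < 1 := inv_lt_one_of_one_lt₀ hp1
  set Q := Polynomial.taylor 1 P with hQ
  have hQd : Q.natDegree < φ := by rw [hQ, Polynomial.natDegree_taylor]; exact hP
  have hπ0 : 0 < ‖π‖ := by
    rcases (norm_nonneg π).eq_or_lt with h | h
    · rw [← h, zero_pow hφ.ne'] at hπ; exact absurd hπ hpi0.ne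
    · exact h
  have hπ1 : ‖π‖ ≤ 1 := by
    by_contra hcon
    push Not at hcon
    have := one_lt_pow₀ hcon hφ.ne'
    rw [hπ] at this; linarith
  have heval : P.eval (π + 1) = ∑ l ∈ Finset.range φ with Q.coeff l ≠ 0, Q.coeff l * π ^ l := by
    rw [← Polynomial.taylor_eval, Polynomial.eval_eq_sum_range' hQd, Finset.sum_filter]
    refine Finset.sum_congr rfl fun l _ => ?_
    split_ifs with h
    · rfl
    · push Not at h
      rw [h, zero_mul]
  have hQl : ∀ l, ‖Q.coeff l‖ ≤ p * ‖P.eval (π + 1)‖ := by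
    intro l
    by_cases h0 : Q.coeff l = 0
    · rw [h0, norm_zero]; positivity
    have hl : l < φ := by
      by_contra hge
      exact h0 (Polynomial.coeff_eq_zero_of_natDegree_lt (hQd.trans_le (not_lt.1 hge)))
    have hmem : l ∈ (Finset.range φ).filter (fun l => Q.coeff l ≠ 0) :=
      Finset.mem_filter.2 ⟨Finset.mem_range.2 hl, h0⟩
    have hpw : Set.Pairwise ((Finset.range φ).filter (fun l => Q.coeff l ≠ 0) : Set ℕ)
        (fun i j ↦ ‖Q.coeff i * π ^ i‖ ≠ ‖Q.coeff j * π ^ j‖) := by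
      intro a ha b hb hab heq
      obtain ⟨ha1, ha2⟩ := Finset.mem_filter.1 (Finset.mem_coe.1 ha)
      obtain ⟨hb1, hb2⟩ := Finset.mem_filter.1 (Finset.mem_coe.1 hb)
      obtain ⟨va, hva⟩ := (hval a).resolve_left ha2
      obtain ⟨vb, hvb⟩ := (hval b).resolve_left hb2
      rw [norm_mul, norm_mul, norm_pow, norm_pow, hva, hvb] at heq
      have h2 := congrArg (fun y => y ^ φ) heq
      simp only [mul_pow] at h2
      rw [← pow_mul ‖π‖, ← pow_mul ‖π‖, mul_comm a φ, mul_comm b φ, pow_mul ‖π‖, pow_mul ‖π‖, hπ,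
        ← pow_mul, ← pow_mul, ← pow_add, ← pow_add] at h2
      have h3 := (pow_right_injective₀ hpi0 hpi1.ne) h2
      have ha3 := Finset.mem_range.1 ha1
      have hb3 := Finset.mem_range.1 hb1
      apply hab
      have h4 : (va * φ + a) % φ = (vb * φ + b) % φ := by rw [h3]
      rwa [Nat.mul_add_mod_self_right, Nat.mul_add_mod_self_right, Nat.mod_eq_of_lt ha3,
        Nat.mod_eq_of_lt hb3] at h4
    have hnorm := IsUltrametricDist.norm_sum_eq_sup'_of_pairwise_ne ⟨l, hmem⟩ hpw
    rw [← heval] at hnorm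
    have h5 : ‖Q.coeff l * π ^ l‖ ≤ ‖P.eval (π + 1)‖ := by
      rw [hnorm]; exact Finset.le_sup' (fun i => ‖Q.coeff i * π ^ i‖) hmem
    have h6 : (p : ℝ)⁻¹ ≤ ‖π‖ ^ l := by
      rw [← hπ]; exact pow_le_pow_of_le_one hπ0.le hπ1 hl.le
    rw [norm_mul, norm_pow] at h5
    have h7 : ‖Q.coeff l‖ * (p : ℝ)⁻¹ ≤ ‖P.eval (π + 1)‖ :=
      (mul_le_mul_of_nonneg_left h6 (norm_nonneg _)).trans h5
    rwa [← div_eq_mul_inv, div_le_iff₀ (by positivity), mul_comm] at h7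
  have hPQ : P = Polynomial.taylor (-1) Q := by
    rw [hQ, Polynomial.taylor_taylor, neg_add_cancel, Polynomial.taylor_zero]
  conv_lhs => rw [hPQ]
  rw [taylor_coeff_sum Q (-1) j φ hQd]
  refine norm_sum_le_bd _ _ (by positivity) fun l _ => ?_
  rw [norm_mul, norm_mul, norm_pow, norm_neg, norm_one, one_pow, one_mul]
  exact (mul_le_of_le_one_right (norm_nonneg _)
    (IsUltrametricDist.norm_natCast_le_one K _)).trans (hQl l)

end PartThree

section PartFour
variable {K : Type*} [NontriviallyNormedField K] [IsUltrametricDist K]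

lemma sum_block (ω : K) (h t : ℕ) (ht : t < h) (q : ℕ) :
    ∑ j ∈ Finset.range (q * h), (if t = j % h then ω ^ j else 0) =
      ∑ a ∈ Finset.range q, ω ^ (a * h + t) := by
  induction q with
  | zero => simp
  | succ q ih =>
    rw [Nat.succ_mul, Finset.sum_range_add, ih, Finset.sum_range_succ]
    congr 1
    rw [Finset.sum_eq_single_of_mem t (Finset.mem_range.2 ht)]
    · rw [if_pos]
      rw [Nat.mul_add_mod_of_lt ht]
    · intro b hb hbt
      rw [if_neg]
      rw [Nat.mul_add_mod_of_lt (Finset.mem_range.1 hb)]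
      exact fun h => hbt h.symm

lemma reduce_exp {p : ℕ} (hp : p.Prime) (k : ℕ) {ω : K} (hω : IsPrimitiveRoot ω (p ^ (k + 1)))
    (e : ℕ) (he : e < p ^ (k + 1)) :
    ∑ j ∈ Finset.range ((p - 1) * p ^ k), ((if e = j then (1 : ℤ) else 0) -
      (if e = (p - 1) * p ^ k + j % p ^ k then 1 else 0) : ℤ) * ω ^ j = ω ^ e := by
  have hpp : p ^ (k + 1) = (p - 1) * p ^ k + p ^ k := by
    obtain ⟨q, rfl⟩ : ∃ q, p = q + 1 := ⟨p - 1, (Nat.sub_add_cancel hp.one_le).symm⟩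
    rw [pow_succ, Nat.add_sub_cancel]; ring
  have hh : 0 < p ^ k := pow_pos hp.pos _
  set φ := (p - 1) * p ^ k with hφ
  set h := p ^ k with hhdef
  simp only [Int.cast_sub, sub_mul, Finset.sum_sub_distrib]
  by_cases hlt : e < φ
  · have h2 : ∑ j ∈ Finset.range φ, (((if e = φ + j % h then 1 else 0 : ℤ)) : K) * ω ^ j = 0 := by
      refine Finset.sum_eq_zero fun j _ => ?_
      rw [if_neg (by omega)]; simp
    rw [h2, sub_zero, Finset.sum_eq_single_of_mem e (Finset.mem_range.2 hlt)]
    · simp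
    · intro b _ hb; rw [if_neg (Ne.symm hb)]; simp
  · obtain ⟨t, rfl⟩ := Nat.exists_eq_add_of_le (not_lt.1 hlt)
    have ht : t < h := by omega
    have h1 : ∑ j ∈ Finset.range φ, (((if φ + t = j then 1 else 0 : ℤ)) : K) * ω ^ j = 0 := by
      refine Finset.sum_eq_zero fun j hj => ?_
      have := Finset.mem_range.1 hj
      rw [if_neg (by omega)]; simp
    have h2 : ∑ j ∈ Finset.range φ, (((if φ + t = φ + j % h then 1 else 0 : ℤ)) : K) * ω ^ j =
        ∑ j ∈ Finset.range φ, (if t = j % h then ω ^ j else 0) := by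
      refine Finset.sum_congr rfl fun j _ => ?_
      by_cases hj : t = j % h
      · rw [if_pos (by omega), if_pos hj]; simp
      · rw [if_neg (by omega), if_neg hj]; simp
    rw [h1, h2, hφ, sum_block ω h t ht, zero_sub]
    have hprim : IsPrimitiveRoot (ω ^ h) p :=
      hω.pow (pow_pos hp.pos _) (by rw [pow_succ])
    have h3 := hprim.geom_sum_eq_zero hp.one_lt
    have h4 : ∑ a ∈ Finset.range p, ω ^ (a * h + t) = 0 := by
      have : ∀ a, ω ^ (a * h + t) = (ω ^ h) ^ a * ω ^ t := fun a => by
        rw [← pow_mul, ← pow_add, mul_comm a h]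
      simp only [this]
      rw [← Finset.sum_mul, h3, zero_mul]
    have h5 : Finset.range p = Finset.range ((p - 1) + 1) := by
      rw [Nat.sub_add_cancel hp.one_le]
    rw [h5, Finset.sum_range_succ] at h4
    rw [eq_comm]
    exact eq_neg_of_add_eq_zero_right h4

variable [IsAlgClosed K] [CharZero K]

lemma split_roots {ι : Type*} [Fintype ι] {p : ℕ} (hp : p.Prime) (ζ : ι → K)
    (hζ : ∀ i, ∃ n, 0 < n ∧ ζ i ^ n = 1) :
    ∃ (k r : ℕ) (ω : K) (ξ : ι → K) (e : ι → ℕ), 0 < r ∧ IsPrimitiveRoot ω (p ^ (k + 1)) ∧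
      (∀ i, ξ i ^ p ^ r = ξ i) ∧ (∀ i, e i < p ^ (k + 1)) ∧ ∀ i, ζ i = ξ i * ω ^ e i := by
  choose n hn hζn using hζ
  set m := ∏ i, n i with hm
  have hmpos : 0 < m := Finset.prod_pos fun i _ => hn i
  obtain ⟨k, M, hpM, hmk⟩ := Nat.exists_eq_pow_mul_and_not_dvd hmpos.ne' p hp.ne_one
  have hcop : Nat.Coprime p M := (hp.coprime_iff_not_dvd).2 hpM
  have hMpos : 0 < M := Nat.pos_of_ne_zero fun h => hpM (by rw [h]; exact dvd_zero p)
  have hζm : ∀ i, ζ i ^ m = 1 := fun i => by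
    obtain ⟨d, hd⟩ := Finset.dvd_prod_of_mem n (Finset.mem_univ i)
    rw [hm, hd, pow_mul, hζn, one_pow]
  have hcop2 : Nat.Coprime (p ^ (k + 1)) M := hcop.pow_left _
  have hq : 0 < p ^ (k + 1) := pow_pos hp.pos _
  have : NeZero ((p ^ (k + 1) : ℕ) : K) := ⟨by exact_mod_cast hq.ne'⟩
  obtain ⟨ω, hω⟩ := HasEnoughRootsOfUnity.exists_primitiveRoot K (p ^ (k + 1))
  have : NeZero (p ^ (k + 1)) := ⟨hq.ne'⟩
  obtain ⟨A, hA1, hA2⟩ := Nat.chineseRemainder hcop2 1 0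
  obtain ⟨B, hB1, hB2⟩ := Nat.chineseRemainder hcop2 0 1
  have hζqM : ∀ i, ζ i ^ (p ^ (k + 1) * M) = 1 := fun i => by
    have : p ^ (k + 1) * M = m * p := by rw [hmk]; ring
    rw [this, pow_mul, hζm, one_pow]
  have hMA : M ∣ A := (Nat.modEq_zero_iff_dvd).1 hA2
  have hqB : p ^ (k + 1) ∣ B := (Nat.modEq_zero_iff_dvd).1 hB1
  have hAB : A + B ≡ 1 [MOD p ^ (k + 1) * M] := by
    rw [← Nat.modEq_and_modEq_iff_modEq_mul hcop2]
    exact ⟨by simpa using hA1.add hB1, by simpa using hA2.add hB2⟩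
  have hpowmod : ∀ (x : K) (n a b : ℕ), x ^ n = 1 → a ≡ b [MOD n] → x ^ a = x ^ b := by
    intro x n a b hx hab
    rw [pow_eq_pow_mod a hx, pow_eq_pow_mod b hx, hab]
  have hω' : ∀ i, ∃ e < p ^ (k + 1), ω ^ e = ζ i ^ A := fun i => by
    refine hω.eq_pow_of_pow_eq_one ?_
    obtain ⟨d, hd⟩ := hMA
    rw [← pow_mul, hd, show M * d * p ^ (k + 1) = p ^ (k + 1) * M * d by ring, pow_mul, hζqM,
      one_pow]
  choose e he1 he2 using hω'
  refine ⟨k, M.totient, ω, fun i => ζ i ^ B, e, Nat.totient_pos.2 hMpos, hω, fun i => ?_, he1,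
    fun i => ?_⟩
  · have hM1 : (ζ i ^ B) ^ M = 1 := by
      obtain ⟨d, hd⟩ := hqB
      rw [← pow_mul, hd, show p ^ (k + 1) * d * M = p ^ (k + 1) * M * d by ring, pow_mul, hζqM,
        one_pow]
    have := hpowmod _ M _ _ hM1 (Nat.ModEq.pow_totient hcop)
    rwa [pow_one] at this
  · rw [he2, ← pow_add, add_comm, hpowmod _ _ _ _ (hζqM i) hAB, pow_one]

lemma lemmaB {ι : Type*} [Fintype ι] {p : ℕ} (hp : p.Prime) (hpnorm : ‖(p : K)‖ = (p : ℝ)⁻¹)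
    (c : ι → ℤ) : ∃ c₀ : ℝ, 0 < c₀ ∧ ∀ ζ : ι → K, (∀ i, ∃ n, 0 < n ∧ ζ i ^ n = 1) →
      ‖∑ i, (c i : K) * ζ i‖ < c₀ → ∑ i, (c i : K) * ζ i = 0 := by
  classical
  obtain ⟨N₀, hN₀⟩ := lemmaA (K := K) hp hpnorm (Sum.elim c (-c))
  have hp1 : (1 : ℝ) < p := by exact_mod_cast hp.one_lt
  have hp0 : (0 : ℝ) < p := by linarith
  refine ⟨((p : ℝ)⁻¹) ^ N₀ / p, by positivity, fun ζ hζ hlt => ?_⟩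
  obtain ⟨k, r, ω, ξ, e, hr, hω, hξ, he, hζe⟩ := split_roots hp ζ hζ
  have hpp : 0 < p - 1 := Nat.sub_pos_of_lt hp.one_lt
  set h := p ^ k with hh
  set φ := (p - 1) * h with hφ
  have hφ0 : 0 < φ := Nat.mul_pos hpp (pow_pos hp.pos _)
  set D : ι → ℕ → ℤ := fun i j => (if e i = j then (1 : ℤ) else 0) -
    (if e i = φ + j % h then 1 else 0) with hD
  set C : ℕ → K := fun j => ∑ i, (c i : K) * ((D i j : ℤ) : K) * ξ i with hC
  have hs : ∑ i, (c i : K) * ζ i = ∑ j ∈ Finset.range φ, C j * ω ^ j := by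
    simp only [hC, Finset.sum_mul]
    rw [Finset.sum_comm]
    refine Finset.sum_congr rfl fun i _ => ?_
    rw [hζe i, ← reduce_exp hp k hω (e i) (he i), Finset.mul_sum, Finset.mul_sum]
    refine Finset.sum_congr rfl fun j _ => ?_
    ring
  set P : Polynomial K := ∑ j ∈ Finset.range φ, Polynomial.monomial j (C j) with hP
  have hPc : ∀ j < φ, P.coeff j = C j := by
    intro j hj
    rw [hP, Polynomial.finsetSum_coeff, Finset.sum_eq_single_of_mem j (Finset.mem_range.2 hj)]
    · simp
    · intro b _ hb; rw [Polynomial.coeff_monomial, if_neg hb]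
  have hPd : P.natDegree < φ := by
    refine (Polynomial.natDegree_sum_le_of_forall_le (n := φ - 1) _ _ fun j hj => ?_).trans_lt
      (by omega)
    have := Finset.mem_range.1 hj
    exact (Polynomial.natDegree_monomial_le _).trans (by omega)
  have hPe : P.eval ω = ∑ i, (c i : K) * ζ i := by
    rw [hs, hP, Polynomial.eval_finsetSum]
    simp
  have hφt : (p ^ (k + 1)).totient = φ := by
    rw [Nat.totient_prime_pow_succ hp, mul_comm]
  have hπ := norm_pi hp hpnorm k hω
  rw [hφt] at hπ
  have hval : ∀ l, (Polynomial.taylor 1 P).coeff l = 0 ∨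
      ∃ v : ℕ, ‖(Polynomial.taylor 1 P).coeff l‖ = ((p : ℝ)⁻¹) ^ v := by
    intro l
    obtain ⟨N₁, hN₁⟩ := lemmaA (K := K) hp hpnorm
      (fun i => c i * ∑ j ∈ Finset.range φ, D i j * (j.choose l : ℤ))
    have heq : (Polynomial.taylor 1 P).coeff l =
        ∑ i, ((c i * ∑ j ∈ Finset.range φ, D i j * (j.choose l : ℤ) : ℤ) : K) * ξ i := by
      rw [taylor_coeff_sum P 1 l φ hPd]
      have : ∀ j ∈ Finset.range φ, P.coeff j * (1 ^ (j - l) * (j.choose l : K)) =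
          ∑ i, (c i : K) * ((D i j : ℤ) : K) * ξ i * (j.choose l : K) := by
        intro j hj
        rw [hPc j (Finset.mem_range.1 hj), one_pow, one_mul, hC, Finset.sum_mul]
      rw [Finset.sum_congr rfl this, Finset.sum_comm]
      refine Finset.sum_congr rfl fun i _ => ?_
      push_cast
      rw [Finset.mul_sum, Finset.sum_mul]
      refine Finset.sum_congr rfl fun j _ => ?_
      ring
    rw [heq]
    rcases hN₁ ξ r hr hξ with h0 | ⟨j, -, hj⟩
    · exact Or.inl h0
    · exact Or.inr ⟨j, hj⟩
  have hC0 : ∀ j ∈ Finset.range φ, C j = 0 := by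
    intro j hj
    have h1 := pi_expansion hp hφ0 hπ P hPd hval j
    rw [hPc j (Finset.mem_range.1 hj), sub_add_cancel, hPe] at h1
    have h2 : ‖C j‖ < ((p : ℝ)⁻¹) ^ N₀ := by
      rw [lt_div_iff₀ hp0] at hlt
      linarith [mul_comm (p : ℝ) ‖∑ i, (c i : K) * ζ i‖]
    have h0p : (0 : K) ^ p ^ r = 0 := zero_pow (pow_pos hp.pos _).ne'
    have h3 := hN₀ (Sum.elim (fun i => if e i = j then ξ i else 0)
      (fun i => if e i = φ + j % h then ξ i else 0)) r hr (by
        rintro (i | i)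
        · simp only [Sum.elim_inl]; split_ifs; exacts [hξ i, h0p]
        · simp only [Sum.elim_inr]; split_ifs; exacts [hξ i, h0p])
    have h4 : ∑ i, ((Sum.elim c (-c) i : ℤ) : K) *
        (Sum.elim (fun i => if e i = j then ξ i else 0)
      (fun i => if e i = φ + j % h then ξ i else 0) : ι ⊕ ι → K) i = C j := by
      rw [Fintype.sum_sum_type, hC, ← Finset.sum_add_distrib]
      refine Finset.sum_congr rfl fun i _ => ?_
      simp only [Sum.elim_inl, Sum.elim_inr, hD, Pi.neg_apply]
      split_ifs <;> push_cast <;> ring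
    rw [h4] at h3
    rcases h3 with h3 | ⟨v, hv, hv2⟩
    · exact h3
    · exfalso
      rw [hv2] at h2
      have : ((p : ℝ)⁻¹) ^ N₀ ≤ ((p : ℝ)⁻¹) ^ v :=
        pow_le_pow_of_le_one (by positivity) (inv_le_one_of_one_le₀ hp1.le) hv.le
      linarith
  rw [hs]
  exact Finset.sum_eq_zero fun j hj => by rw [hC0 j hj, zero_mul]
end PartFour

section PartFive
variable {K : Type*} [NontriviallyNormedField K] [IsUltrametricDist K] [IsAlgClosed K] [CharZero K]

lemma det_vanish {ι : Type*} [Fintype ι] [DecidableEq ι] {p : ℕ} (hp : p.Prime)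
    (hpnorm : ‖(p : K)‖ = (p : ℝ)⁻¹) (a : ι → K) (i₁ : ι) (ha : a i₁ ≠ 0) :
    ∃ c : ℝ, 0 < c ∧ ∀ M : Matrix ι ι K, (∀ i j, ∃ n, 0 < n ∧ M i j ^ n = 1) →
      (∀ i, ‖∑ j, a j * M i j‖ < c) → M.det = 0 := by
  obtain ⟨c₀, hc₀, hB⟩ := lemmaB (K := K) hp hpnorm
    (fun σ : Equiv.Perm ι => ((Equiv.Perm.sign σ : ℤˣ) : ℤ))
  have ha' : 0 < ‖a i₁‖ := norm_pos_iff.2 ha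
  refine ⟨c₀ * ‖a i₁‖, by positivity, fun M hM hlt => ?_⟩
  have hM1 : ∀ i j, ‖M i j‖ = 1 := fun i j => by
    obtain ⟨n, hn, h⟩ := hM i j
    exact norm_root_one hn h
  have hcr : M.det * a i₁ = (M.updateCol i₁ (M.mulVec a)).det := by
    have h1 : M.cramer (M.mulVec a) = M.det • a := by
      rw [Matrix.cramer_eq_adjugate_mulVec, Matrix.mulVec_mulVec, Matrix.adjugate_mul,
        Matrix.smul_mulVec, Matrix.one_mulVec]
    rw [← Matrix.cramer_apply, h1]; rfl
  have hn : ‖M.det * a i₁‖ < c₀ * ‖a i₁‖ := by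
    rw [hcr, Matrix.det_apply']
    refine norm_sum_lt_bd _ _ (by positivity) fun σ _ => ?_
    rw [norm_mul, norm_prod]
    have hsg : ‖(((Equiv.Perm.sign σ : ℤˣ) : ℤ) : K)‖ = 1 := by
      rcases Int.units_eq_one_or (Equiv.Perm.sign σ) with h | h <;> rw [h] <;> simp
    rw [hsg, one_mul, ← Finset.mul_prod_erase _ _ (Finset.mem_univ i₁), Matrix.updateCol_self,
      Finset.prod_eq_one, mul_one]
    · have := hlt (σ i₁)
      rw [Matrix.mulVec, dotProduct]
      simpa only [mul_comm] using this
    · intro j hj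
      rw [Matrix.updateCol_ne (Finset.ne_of_mem_erase hj), hM1]
  rw [norm_mul] at hn
  have hn2 : ‖M.det‖ < c₀ := lt_of_mul_lt_mul_right hn ha'.le
  rw [Matrix.det_apply'] at hn2 ⊢
  refine hB (fun σ => ∏ i, M (σ i) i) (fun σ => ?_) hn2
  choose n hn hMn using hM
  refine ⟨∏ i, n (σ i) i, Finset.prod_pos fun i _ => hn _ _, ?_⟩
  rw [← Finset.prod_pow]
  refine Finset.prod_eq_one fun i hi => ?_
  obtain ⟨d, hd⟩ := Finset.dvd_prod_of_mem (fun i => n (σ i) i) hi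
  rw [hd, pow_mul, hMn, one_pow]

lemma lemmaT {ι : Type*} [Fintype ι] {p : ℕ} (hp : p.Prime)
    (hpnorm : ‖(p : K)‖ = (p : ℝ)⁻¹) (a : ι → K) (i₁ : ι) (ha : a i₁ ≠ 0) :
    ∃ c : ℝ, 0 < c ∧ ∃ B : ℕ, 0 < B ∧ ∀ ζ : ι → K, (∀ i, ∃ n, 0 < n ∧ ζ i ^ n = 1) →
      ‖∑ i, a i * ζ i‖ < c → ∃ i j, i ≠ j ∧ ζ i ^ B = ζ j ^ B := by
  classical
  obtain ⟨c, hc, hdet⟩ := det_vanish hp hpnorm a i₁ ha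
  set T : Set (ι → K) := {ζ | (∀ i, ∃ n, 0 < n ∧ ζ i ^ n = 1) ∧ ‖∑ i, a i * ζ i‖ < c} with hT
  have hspan : Submodule.span K T < ⊤ := by
    rw [lt_top_iff_ne_top]
    intro htop
    obtain ⟨b, hbT, hbs, hbl⟩ := exists_linearIndependent K T
    rw [htop] at hbs
    have hBas := Module.Basis.mk hbl (by rw [Subtype.range_coe, hbs])
    have hfin0 : Finite b := hbl.finite
    have hfin : Fintype b := Fintype.ofFinite b
    have hcard : Fintype.card b = Fintype.card ι := by
      rw [← Module.finrank_eq_card_basis hBas, Module.finrank_fintype_fun_eq_card]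
    let eqv : ι ≃ b := (Fintype.equivOfCardEq hcard).symm
    have hli : LinearIndependent K (fun i => ((eqv i : b) : ι → K)) :=
      hbl.comp eqv eqv.injective
    let M : Matrix ι ι K := fun i => (eqv i : ι → K)
    have hM : LinearIndependent K M.row := hli
    rw [Matrix.linearIndependent_rows_iff_isUnit, Matrix.isUnit_iff_isUnit_det] at hM
    exact hM.ne_zero (hdet M (fun i j => (hbT (eqv i).2).1 j) (fun i => (hbT (eqv i).2).2))
  obtain ⟨f, hf0, hf⟩ := Submodule.exists_le_ker_of_lt_top _ hspan
  have hfsum : ∀ x : ι → K, f x = ∑ i, f (Pi.single i 1) * x i := by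
    intro x
    conv_lhs => rw [pi_eq_sum_univ' x]
    rw [map_sum]
    refine Finset.sum_congr rfl fun i _ => ?_
    rw [map_smul, smul_eq_mul, mul_comm]
  obtain ⟨i₂, hi₂⟩ : ∃ i, f (Pi.single i 1) ≠ 0 := by
    by_contra! h
    apply hf0
    ext x
    simp [h]
  obtain ⟨B, hB, hMM⟩ := exact_MM (fun i => f (Pi.single i 1)) i₂ hi₂
  refine ⟨c, hc, B, hB, fun ζ hζ hlt => hMM ζ hζ ?_⟩
  rw [← hfsum]
  exact hf (Submodule.subset_span ⟨hζ, hlt⟩)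
end PartFive

section PartSix
open Polynomial
variable {K : Type*} [NontriviallyNormedField K] [IsUltrametricDist K]

lemma norm_nat_ge {p : ℕ} (hp : p.Prime) (hpnorm : ‖(p : K)‖ = (p : ℝ)⁻¹) (N : ℕ) (hN : 0 < N) :
    ((N : ℝ))⁻¹ ≤ ‖(N : K)‖ := by
  have hp1 : (1 : ℝ) < p := by exact_mod_cast hp.one_lt
  have hp0 : (0 : ℝ) < p := by linarith
  obtain ⟨k, m, hpm, rfl⟩ := Nat.exists_eq_pow_mul_and_not_dvd hN.ne' p hp.ne_one
  have hm : ‖(m : K)‖ = 1 := by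
    apply le_antisymm (IsUltrametricDist.norm_natCast_le_one K m)
    have hcop : IsCoprime (p : ℤ) (m : ℤ) := Nat.Coprime.isCoprime ((hp.coprime_iff_not_dvd).2 hpm)
    obtain ⟨a, b, hab⟩ := hcop
    have h1 : (a : K) * p + b * m = 1 := by exact_mod_cast congrArg (Int.cast : ℤ → K) hab
    by_contra! hlt
    have ha := IsUltrametricDist.norm_intCast_le_one K a
    have hb := IsUltrametricDist.norm_intCast_le_one K b
    have h2 : ‖(a : K) * p‖ < 1 := by
      rw [norm_mul, hpnorm]
      exact (mul_le_of_le_one_left (by positivity) ha).trans_lt (inv_lt_one_of_one_lt₀ hp1)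
    have h3 : ‖(b : K) * m‖ < 1 := by
      rw [norm_mul]
      exact (mul_le_of_le_one_left (by positivity) hb).trans_lt hlt
    have h4 := IsUltrametricDist.norm_add_le_max ((a : K) * p) (b * m)
    rw [h1, norm_one] at h4
    exact absurd (max_lt h2 h3) (not_lt.2 h4)
  have hm0 : 0 < m := Nat.pos_of_ne_zero fun h => hpm (by rw [h]; exact dvd_zero p)
  have hm1 : (1 : ℝ) ≤ m := by exact_mod_cast hm0
  push_cast
  rw [norm_mul, hm, norm_pow, hpnorm, mul_one, inv_pow]
  have : (0 : ℝ) < (p : ℝ) ^ k := by positivity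
  exact inv_anti₀ this (le_mul_of_one_le_right this.le hm1)

lemma norm_sub_le_max_aux (x y : K) : ‖x - y‖ ≤ max ‖x‖ ‖y‖ := by
  have := IsUltrametricDist.norm_add_le_max x (-y)
  rwa [norm_neg, ← sub_eq_add_neg] at this

lemma norm_sub_root_le {N : ℕ} (hN : 0 < N) {x : K} (hx : x ^ N = 1) (α : K) :
    ‖x - α‖ ≤ max 1 ‖α‖ := by
  have := norm_sub_le_max_aux x α
  rwa [norm_root_one hN hx] at this

lemma prod_diff_roots {N : ℕ} (hN : 0 < N) {θ : K} (hθ : IsPrimitiveRoot θ N) (k₀ : ℕ)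
    (hk₀ : k₀ < N) : ‖∏ k ∈ (Finset.range N).erase k₀, (θ ^ k₀ - θ ^ k)‖ = ‖(N : K)‖ := by
  have h1 : (X ^ N - 1 : K[X]) = ∏ k ∈ Finset.range N, (X - C (θ ^ k)) := by
    rw [X_pow_sub_one_eq_prod hN hθ]
    symm
    refine Finset.prod_bij (fun k _ => θ ^ k) ?_ ?_ ?_ ?_
    · intro k _
      rw [mem_nthRootsFinset hN, ← pow_mul, mul_comm, pow_mul, hθ.pow_eq_one, one_pow]
    · intro a ha b hb hab
      exact hθ.pow_inj (Finset.mem_range.1 ha) (Finset.mem_range.1 hb) hab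
    · intro x hx
      rw [mem_nthRootsFinset hN] at hx
      have : NeZero N := ⟨hN.ne'⟩
      obtain ⟨i, hi, h⟩ := hθ.eq_pow_of_pow_eq_one hx
      exact ⟨i, Finset.mem_range.2 hi, h⟩
    · intro _ _; rfl
  set x := θ ^ k₀ with hx
  have hxN : x ^ N = 1 := by rw [hx, ← pow_mul, mul_comm, pow_mul, hθ.pow_eq_one, one_pow]
  have h2 := (Commute.all (X : K[X]) (C x)).geom_sum₂_mul N
  rw [← C_pow, hxN, C_1, h1, ← Finset.prod_erase_mul _ _ (Finset.mem_range.2 hk₀)] at h2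
  have h3 := mul_right_cancel₀ (X_sub_C_ne_zero x) h2
  have h4 := congrArg (eval x) h3
  rw [eval_prod, eval_finsetSum] at h4
  simp only [eval_mul, eval_pow, eval_X, eval_C, eval_sub] at h4
  rw [← h4]
  have h5 : ∀ i ∈ Finset.range N, x ^ i * x ^ (N - 1 - i) = x ^ (N - 1) := by
    intro i hi
    have := Finset.mem_range.1 hi
    rw [← pow_add]; congr 1; omega
  rw [Finset.sum_congr rfl h5, Finset.sum_const, Finset.card_range, nsmul_eq_mul, norm_mul,
    norm_pow, norm_root_one hN hxN, one_pow, mul_one]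

lemma single_alpha {p : ℕ} (hp : p.Prime) (hpnorm : ‖(p : K)‖ = (p : ℝ)⁻¹) {N : ℕ} (hN : 0 < N)
    {θ : K} (hθ : IsPrimitiveRoot θ N) (S : Finset ℕ) (hS : S ⊆ Finset.range N) (α : K) {c : ℝ}
    (hc : 0 < c) (hc1 : c ≤ 1) (h : ∀ k ∈ S, c * max 1 ‖α‖ ≤ ‖θ ^ k - α‖) :
    ∑ k ∈ S, (Real.log (max 1 ‖α‖) - Real.log ‖θ ^ k - α‖) ≤ Real.log (1 / c) + Real.log N := by
  have hroot : ∀ k, (θ ^ k) ^ N = 1 := fun k => by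
    rw [← pow_mul, mul_comm, pow_mul, hθ.pow_eq_one, one_pow]
  have hN1 : (1 : ℝ) ≤ N := by exact_mod_cast hN
  have hm : 0 < max 1 ‖α‖ := lt_max_of_lt_left one_pos
  rcases S.eq_empty_or_nonempty with rfl | hne
  · rw [Finset.sum_empty]
    exact add_nonneg (Real.log_nonneg ((one_le_div hc).2 hc1)) (Real.log_nonneg hN1)
  obtain ⟨k₀, hk₀, hmin⟩ := Finset.exists_min_image S (fun k => ‖θ ^ k - α‖) hne
  have hpos : ∀ k ∈ S, 0 < ‖θ ^ k - α‖ := fun k hk => lt_of_lt_of_le (by positivity) (h k hk)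
  have hle1 : ∀ k, ‖θ ^ k₀ - θ ^ k‖ ≤ 1 := fun k => by
    have := norm_sub_root_le hN (hroot k₀) (θ ^ k)
    rwa [norm_root_one hN (hroot k), max_self] at this
  have hne0 : ∀ k ∈ (Finset.range N).erase k₀, 0 < ‖θ ^ k₀ - θ ^ k‖ := by
    intro k hk
    rw [norm_pos_iff, sub_ne_zero]
    intro heq
    have := hθ.pow_inj (Finset.mem_range.1 (hS hk₀))
      (Finset.mem_range.1 (Finset.mem_of_mem_erase hk)) heq
    exact Finset.ne_of_mem_erase hk this.symm
  rw [← Finset.add_sum_erase _ _ hk₀]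
  apply add_le_add
  · rw [← Real.log_div hm.ne' (hpos _ hk₀).ne']
    refine Real.log_le_log (div_pos hm (hpos _ hk₀)) ?_
    rw [div_le_div_iff₀ (hpos _ hk₀) hc]
    linarith [h k₀ hk₀]
  · have hterm : ∀ k ∈ S.erase k₀, Real.log (max 1 ‖α‖) - Real.log ‖θ ^ k - α‖ ≤
        -Real.log ‖θ ^ k₀ - θ ^ k‖ := by
      intro k hk
      have hkS := Finset.mem_of_mem_erase hk
      have hd := hne0 k (Finset.erase_subset_erase _ hS hk)
      suffices hsuff : ‖θ ^ k₀ - θ ^ k‖ * max 1 ‖α‖ ≤ ‖θ ^ k - α‖ by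
        have := Real.log_le_log (by positivity) hsuff
        rw [Real.log_mul hd.ne' hm.ne'] at this
        linarith
      by_cases hα : ‖α‖ ≤ 1
      · rw [max_eq_left hα, mul_one]
        have h1 := norm_sub_le_max_aux (θ ^ k₀ - α) (θ ^ k - α)
        rw [sub_sub_sub_cancel_right] at h1
        exact h1.trans (max_le (hmin k hkS) le_rfl)
      · push Not at hα
        rw [max_eq_right hα.le]
        refine (mul_le_of_le_one_left (norm_nonneg _) (hle1 k)).trans ?_
        rw [norm_sub_rev]
        have h1 := IsUltrametricDist.norm_add_le_max (α - θ ^ k) (θ ^ k)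
        rw [sub_add_cancel, norm_root_one hN (hroot k)] at h1
        rcases le_max_iff.1 h1 with h2 | h2
        · exact h2
        · linarith
    refine (Finset.sum_le_sum hterm).trans ?_
    refine (Finset.sum_le_sum_of_subset_of_nonneg (Finset.erase_subset_erase k₀ hS)
      fun k hk _ => ?_).trans ?_
    · exact neg_nonneg.2 (Real.log_nonpos (norm_nonneg _) (hle1 k))
    · rw [Finset.sum_neg_distrib, ← Real.log_prod fun k hk => (hne0 k hk).ne', ← norm_prod,
        prod_diff_roots hN hθ k₀ (Finset.mem_range.1 (hS hk₀))]
      have := Real.log_le_log (by positivity) (norm_nat_ge hp hpnorm N hN)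
      rw [Real.log_inv] at this
      linarith

lemma gauss_roots (a : K) (s : Multiset K) :
    (C a * (s.map fun α => X - C α).prod).gaussNorm (NormedField.toAbsoluteValue K) 1 =
      ‖a‖ * (s.map fun α => max 1 ‖α‖).prod := by
  have hna : IsNonarchimedean (NormedField.toAbsoluteValue K) :=
    IsUltrametricDist.isNonarchimedean_norm
  induction s using Multiset.induction with
  | empty => simp [NormedField.toAbsoluteValue]
  | cons α s ih =>
    rw [Multiset.map_cons, Multiset.map_cons, Multiset.prod_cons, Multiset.prod_cons,
      mul_left_comm, gaussNorm_mul hna one_pos, ih]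
    have : (X - C α : K[X]).gaussNorm (NormedField.toAbsoluteValue K) 1 = max 1 ‖α‖ := by
      apply le_antisymm
      · obtain ⟨i, hi⟩ := exists_eq_gaussNorm (NormedField.toAbsoluteValue K) 1 (X - C α : K[X])
        rw [hi, one_pow, mul_one]
        change ‖(X - C α : K[X]).coeff i‖ ≤ _
        rw [coeff_sub, coeff_X, coeff_C]
        rcases i with _ | _ | i
        · simp
        · simp
        · simp
      · apply max_le
        · have := le_gaussNorm (NormedField.toAbsoluteValue K) (X - C α : K[X]) zero_le_one 1
          change ‖(X - C α : K[X]).coeff 1‖ * _ ≤ _ at this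
          simpa using this
        · have := le_gaussNorm (NormedField.toAbsoluteValue K) (X - C α : K[X]) zero_le_one 0
          change ‖(X - C α : K[X]).coeff 0‖ * _ ≤ _ at this
          simpa using this
    rw [this]; ring

lemma sum_multiset_bound {α : Type*} (S : Finset ℕ) (g : ℕ → α → ℝ) (s : Multiset α) (B : ℝ)
    (h : ∀ a ∈ s, ∑ k ∈ S, g k a ≤ B) :
    ∑ k ∈ S, (s.map (g k)).sum ≤ Multiset.card s * B := by
  induction s using Multiset.induction with
  | empty => simp
  | cons a s ih =>
    simp only [Multiset.map_cons, Multiset.sum_cons, Finset.sum_add_distrib, Multiset.card_cons]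
    have h1 := h a (Multiset.mem_cons_self _ _)
    have h2 := ih fun b hb => h b (Multiset.mem_cons_of_mem hb)
    push_cast
    linarith

lemma log_multiset_prod {α : Type*} (g : α → ℝ) (s : Multiset α) (h : ∀ a ∈ s, g a ≠ 0) :
    Real.log (s.map g).prod = (s.map fun a => Real.log (g a)).sum ∧ (s.map g).prod ≠ 0 := by
  induction s using Multiset.induction with
  | empty => simp
  | cons a s ih =>
    have h1 := h a (Multiset.mem_cons_self _ _)
    have h2 := ih fun b hb => h b (Multiset.mem_cons_of_mem hb)
    simp only [Multiset.map_cons, Multiset.sum_cons, Multiset.prod_cons]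
    exact ⟨by rw [Real.log_mul h1 h2.2, h2.1], mul_ne_zero h1 h2.2⟩

lemma norm_multiset_prod (x : K) (s : Multiset K) :
    ‖(s.map fun α => x - α).prod‖ = (s.map fun α => ‖x - α‖).prod := by
  induction s using Multiset.induction with
  | empty => simp
  | cons a s ih => simp [ih]

variable [IsAlgClosed K]

lemma poly_lemma {p : ℕ} (hp : p.Prime) (hpnorm : ‖(p : K)‖ = (p : ℝ)⁻¹) {N : ℕ} (hN : 0 < N)
    {θ : K} (hθ : IsPrimitiveRoot θ N) (S : Finset ℕ) (hS : S ⊆ Finset.range N) (f : K[X]) {c : ℝ}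
    (hc : 0 < c) (hc1 : c ≤ 1) (hf : ∀ l, ‖f.coeff l‖ ≤ 1)
    (h : ∀ k ∈ S, c ≤ ‖f.eval (θ ^ k)‖) (l : ℕ) (hl : f.coeff l ≠ 0) :
    ∑ k ∈ S, (Real.log ‖f.coeff l‖ - Real.log ‖f.eval (θ ^ k)‖) ≤
      f.natDegree * (Real.log (1 / c) + Real.log N) := by
  classical
  have hroot : ∀ k, (θ ^ k) ^ N = 1 := fun k => by
    rw [← pow_mul, mul_comm, pow_mul, hθ.pow_eq_one, one_pow]
  have hsplit : f.Splits := IsAlgClosed.splits f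
  have hfe : f = C f.leadingCoeff * (f.roots.map fun α => X - C α).prod :=
    hsplit.eq_prod_roots
  have hcard : Multiset.card f.roots = f.natDegree := hsplit.natDegree_eq_card_roots.symm
  set a := f.leadingCoeff with ha
  set R := f.roots with hR
  have hf0 : f ≠ 0 := fun h0 => hl (by rw [h0, coeff_zero])
  have ha0 : 0 < ‖a‖ := norm_pos_iff.2 (leadingCoeff_ne_zero.2 hf0)
  have hG := gauss_roots a R
  rw [← hfe] at hG
  set G := (R.map fun α => max 1 ‖α‖).prod with hGdef
  have hm0 : ∀ α : K, 0 < max 1 ‖α‖ := fun α => lt_max_of_lt_left one_pos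
  have hG1 : ‖a‖ * G ≤ 1 := by
    rw [← hG]
    obtain ⟨i, hi⟩ := exists_eq_gaussNorm (NormedField.toAbsoluteValue K) 1 f
    rw [hi, one_pow, mul_one]
    exact hf i
  have hGl : ‖f.coeff l‖ ≤ ‖a‖ * G := by
    rw [← hG]
    have := le_gaussNorm (NormedField.toAbsoluteValue K) f zero_le_one l
    rw [one_pow, mul_one] at this
    exact this
  have heval : ∀ x : K, ‖f.eval x‖ = ‖a‖ * (R.map fun α => ‖x - α‖).prod := by
    intro x
    rw [← norm_multiset_prod, ← norm_mul]
    congr 1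
    conv_lhs => rw [hfe]
    rw [eval_mul, eval_C, eval_multiset_prod, Multiset.map_map]
    simp
  have hα : ∀ α ∈ R, ∀ k ∈ S, c * max 1 ‖α‖ ≤ ‖θ ^ k - α‖ := by
    intro α hαR k hk
    have h1 := h k hk
    rw [heval] at h1
    obtain ⟨R', hR'⟩ := Multiset.exists_cons_of_mem hαR
    rw [hR', Multiset.map_cons, Multiset.prod_cons] at h1
    have h2 : (R'.map fun β => ‖θ ^ k - β‖).prod ≤ (R'.map fun β => max 1 ‖β‖).prod :=
      Multiset.prod_map_le_prod_map₀ _ _ (fun _ _ => norm_nonneg _)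
        (fun β _ => norm_sub_root_le hN (hroot k) β)
    have h3 : G = max 1 ‖α‖ * (R'.map fun β => max 1 ‖β‖).prod := by
      rw [hGdef, hR', Multiset.map_cons, Multiset.prod_cons]
    calc c * max 1 ‖α‖ ≤ (‖a‖ * (‖θ ^ k - α‖ * (R'.map fun β => max 1 ‖β‖).prod)) * max 1 ‖α‖ := by
          refine mul_le_mul_of_nonneg_right (h1.trans ?_) (hm0 α).le
          gcongr
      _ = (‖a‖ * G) * ‖θ ^ k - α‖ := by rw [h3]; ring
      _ ≤ ‖θ ^ k - α‖ := mul_le_of_le_one_left (norm_nonneg _) hG1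
  have hB : ∀ α ∈ R, ∑ k ∈ S, (Real.log (max 1 ‖α‖) - Real.log ‖θ ^ k - α‖) ≤
      Real.log (1 / c) + Real.log N := fun α hαR =>
    single_alpha hp hpnorm hN hθ S hS α hc hc1 (hα α hαR)
  have hfin := sum_multiset_bound S
    (fun k α => Real.log (max 1 ‖α‖) - Real.log ‖θ ^ k - α‖) R _ hB
  rw [hcard] at hfin
  refine le_trans (Finset.sum_le_sum fun k hk => ?_) hfin
  have hx : ∀ α ∈ R, ‖θ ^ k - α‖ ≠ 0 := fun α hαR =>
    (lt_of_lt_of_le (mul_pos hc (hm0 α)) (hα α hαR k hk)).ne'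
  have e1 := log_multiset_prod (fun α => ‖θ ^ k - α‖) R hx
  have e2 := log_multiset_prod (fun α : K => max 1 ‖α‖) R fun α _ => (hm0 α).ne'
  rw [Multiset.sum_map_sub, ← e1.1, ← e2.1, heval, Real.log_mul ha0.ne' e1.2]
  have h5 := Real.log_le_log (norm_pos_iff.2 hl) hGl
  rw [Real.log_mul ha0.ne' e2.2] at h5
  linarith
end PartSix

section PartSeven

lemma prod_one_sub_inv (S : Finset ℕ) : (∀ q ∈ S, 2 ≤ q) →
    (1 : ℚ) / (S.card + 1) ≤ ∏ q ∈ S, (1 - (q : ℚ)⁻¹) := by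
  induction S using Finset.induction_on_max with
  | empty => intro _; simp
  | insert m S hm ih =>
    intro h
    have h1 := ih fun q hq => h q (Finset.mem_insert_of_mem hq)
    have hmS : m ∉ S := fun hh => lt_irrefl _ (hm m hh)
    have hm2 := h m (Finset.mem_insert_self _ _)
    have hcard : S.card + 2 ≤ m := by
      have : S ⊆ Finset.Ico 2 m := fun q hq =>
        Finset.mem_Ico.2 ⟨h q (Finset.mem_insert_of_mem hq), hm q hq⟩
      have := Finset.card_le_card this
      rw [Nat.card_Ico] at this
      omega
    rw [Finset.prod_insert hmS, Finset.card_insert_of_notMem hmS]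
    have hc : ((S.card : ℚ) + 2) ≤ m := by exact_mod_cast hcard
    have h2 : ((S.card : ℚ) + 1) / (S.card + 2) ≤ 1 - (m : ℚ)⁻¹ := by
      have h3 : (m : ℚ)⁻¹ ≤ ((S.card : ℚ) + 2)⁻¹ := inv_anti₀ (by positivity) hc
      have h4 : ((S.card : ℚ) + 1) / (S.card + 2) = 1 - ((S.card : ℚ) + 2)⁻¹ := by
        field_simp; ring
      linarith
    calc (1 : ℚ) / ((S.card + 1 : ℕ) + 1) =
        ((S.card : ℚ) + 1) / (S.card + 2) * (1 / (S.card + 1)) := by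
          push_cast; field_simp; ring
      _ ≤ _ := mul_le_mul h2 h1 (by positivity) (le_trans (by positivity) h2)

lemma le_totient_mul (N : ℕ) (hN : 0 < N) :
    (N : ℝ) ≤ N.totient * (Real.log N / Real.log 2 + 1) := by
  have h1 := Nat.totient_eq_mul_prod_factors N
  have h2 := prod_one_sub_inv N.primeFactors fun q hq => (Nat.prime_of_mem_primeFactors hq).two_le
  have h3 : (N : ℚ) ≤ N.totient * (N.primeFactors.card + 1) := by
    have : (N : ℚ) * (1 / (N.primeFactors.card + 1)) ≤ N.totient := by
      rw [h1]; exact mul_le_mul_of_nonneg_left h2 (by positivity)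
    rw [mul_one_div, div_le_iff₀ (by positivity)] at this
    exact this
  have h4 : (N : ℝ) ≤ N.totient * (N.primeFactors.card + 1) := by exact_mod_cast h3
  have h5 : (N.primeFactors.card : ℝ) ≤ Real.log N / Real.log 2 := by
    have hl2 : 0 < Real.log 2 := Real.log_pos one_lt_two
    rw [le_div_iff₀ hl2, ← Real.log_pow]
    refine Real.log_le_log (by positivity) ?_
    have : 2 ^ N.primeFactors.card ≤ N := by
      calc 2 ^ N.primeFactors.card ≤ ∏ q ∈ N.primeFactors, q :=
            Finset.pow_card_le_prod _ _ _ fun q hq => (Nat.prime_of_mem_primeFactors hq).two_le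
        _ ≤ N := Nat.le_of_dvd hN (Nat.prod_primeFactors_dvd N)
    exact_mod_cast this
  exact h4.trans (mul_le_mul_of_nonneg_left (by linarith) (by positivity))

lemma dirichlet {ι : Type*} [Fintype ι] (N H : ℕ) (hN : 0 < N) (hH : 0 < H)
    (hHN : H ^ Fintype.card ι < N) (b : ι → ℤ) :
    ∃ (u : ℕ) (x : ι → ℤ), 0 < u ∧ u < N ∧ (∀ i, (N : ℤ) ∣ x i - u * b i) ∧
      ∀ i, (x i).natAbs * H ≤ N := by
  classical
  have hNz : (0 : ℤ) < N := by exact_mod_cast hN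
  have hHz : (0 : ℤ) < H := by exact_mod_cast hH
  have hr0 : ∀ (k : ℕ) i, 0 ≤ ((k : ℤ) * b i) % N := fun k i => Int.emod_nonneg _ hNz.ne'
  have hr1 : ∀ (k : ℕ) i, ((k : ℤ) * b i) % N < N := fun k i => Int.emod_lt_of_pos _ hNz
  have hlt : ∀ (k : ℕ) i, ((k : ℤ) * b i) % N * H / N < H := by
    intro k i
    apply Int.ediv_lt_of_lt_mul hNz
    have := hr1 k i
    nlinarith
  have hge : ∀ (k : ℕ) i, 0 ≤ ((k : ℤ) * b i) % N * H / N := by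
    intro k i
    exact Int.ediv_nonneg (mul_nonneg (hr0 k i) hHz.le) hNz.le
  obtain ⟨k, hk, k', hk', hne, heq⟩ := Finset.exists_ne_map_eq_of_card_lt_of_maps_to
    (s := Finset.range N) (t := Fintype.piFinset fun _ : ι => Finset.range H)
    (f := fun k i => (((k : ℤ) * b i) % N * H / N).toNat)
    (by simpa [Fintype.card_piFinset] using hHN) (by
      intro k _
      rw [Finset.mem_coe, Fintype.mem_piFinset]
      intro i
      rw [Finset.mem_range]
      have := hlt k i
      show (((k : ℤ) * b i) % N * H / N).toNat < H
      omega)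
  have key : ∀ k k' : ℕ, k < k' → k' < N →
      (∀ i, ((k : ℤ) * b i) % N * H / N = ((k' : ℤ) * b i) % N * H / N) →
      ∃ (u : ℕ) (x : ι → ℤ), 0 < u ∧ u < N ∧ (∀ i, (N : ℤ) ∣ x i - u * b i) ∧
      ∀ i, (x i).natAbs * H ≤ N := by
    intro k k' hkk hkN he
    refine ⟨k' - k, fun i => ((k' : ℤ) * b i) % N - ((k : ℤ) * b i) % N, by omega, by omega,
      fun i => ?_, fun i => ?_⟩
    · rw [Nat.cast_sub hkk.le]
      have h1 := Int.mul_ediv_add_emod ((k' : ℤ) * b i) N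
      have h2 := Int.mul_ediv_add_emod ((k : ℤ) * b i) N
      exact ⟨(k : ℤ) * b i / N - (k' : ℤ) * b i / N, by linear_combination h1 - h2⟩
    · have h1 := Int.mul_ediv_add_emod (((k' : ℤ) * b i) % N * H) N
      have h2 := Int.mul_ediv_add_emod (((k : ℤ) * b i) % N * H) N
      rw [he i] at h2
      have h3 := Int.emod_nonneg (((k' : ℤ) * b i) % N * H) hNz.ne'
      have h4 := Int.emod_lt_of_pos (((k' : ℤ) * b i) % N * H) hNz
      have h5 := Int.emod_nonneg (((k : ℤ) * b i) % N * H) hNz.ne'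
      have h6 := Int.emod_lt_of_pos (((k : ℤ) * b i) % N * H) hNz
      have h7 : |(((k' : ℤ) * b i) % N - ((k : ℤ) * b i) % N) * H| ≤ N := by
        rw [abs_le, sub_mul]
        constructor <;> linarith
      rw [abs_mul, abs_of_pos hHz, Int.abs_eq_natAbs] at h7
      exact_mod_cast h7
  have heq' : ∀ i, ((k : ℤ) * b i) % N * H / N = ((k' : ℤ) * b i) % N * H / N := by
    intro i
    have h1 : (((k : ℤ) * b i) % N * H / N).toNat = (((k' : ℤ) * b i) % N * H / N).toNat :=
      congrFun heq i
    have h2 := hge k i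
    have h3 := hge k' i
    omega
  rcases lt_or_gt_of_ne hne with h | h
  · exact key k k' h (Finset.mem_range.1 hk') heq'
  · exact key k' k h (Finset.mem_range.1 hk) fun i => (heq' i).symm

lemma units_average {N N₀ : ℕ} [NeZero N] [NeZero N₀] (h : N₀ ∣ N) (G : (ZMod N₀)ˣ → ℝ) :
    (N₀.totient : ℝ) * ∑ τ : (ZMod N)ˣ, G (ZMod.unitsMap h τ) =
      N.totient * ∑ τ : (ZMod N₀)ˣ, G τ := by
  classical
  have hsurj := ZMod.unitsMap_surjective h
  set F : (ZMod N₀)ˣ → ℕ := fun y => (Finset.univ.filter fun τ => ZMod.unitsMap h τ = y).card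
    with hF
  have hconst : ∀ y, F y = F 1 := fun y =>
    MonoidHom.card_fiber_eq_of_mem_range (ZMod.unitsMap h) (hsurj y) (hsurj 1)
  have hs : ∀ G : (ZMod N₀)ˣ → ℝ, ∑ τ : (ZMod N)ˣ, G (ZMod.unitsMap h τ) = F 1 * ∑ y, G y := by
    intro G
    rw [← Finset.sum_fiberwise (s := Finset.univ) (g := fun τ => ZMod.unitsMap h τ),
      Finset.mul_sum]
    refine Finset.sum_congr rfl fun y _ => ?_
    rw [← hconst y, Finset.sum_congr rfl (g := fun _ => G y), Finset.sum_const, nsmul_eq_mul]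
    intro τ hτ
    rw [(Finset.mem_filter.1 hτ).2]
  have h1 := hs fun _ => 1
  simp only [Finset.sum_const, Finset.card_univ, ZMod.card_units_eq_totient, nsmul_eq_mul,
    mul_one] at h1
  rw [hs, h1]; ring

lemma numeric_bound (T : ℕ) (hT : 0 < T) (L : ℝ) (hL : 0 ≤ L) : ∃ D : ℝ, 0 ≤ D ∧
    ∀ N : ℕ, 2 ≤ N → ∃ H : ℕ, 0 < H ∧ H ^ T < N ∧
      2 * ((N : ℝ) / H) * (L + Real.log N) ≤ N.totient * D * (N : ℝ) ^ (-(1 / (4 * T) : ℝ)) := by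
  have hT0 : (0 : ℝ) < T := by exact_mod_cast hT
  set ε : ℝ := 1 / (8 * T) with hε
  have hε0 : 0 < ε := by positivity
  have hl2 : 0 < Real.log 2 := Real.log_pos one_lt_two
  refine ⟨4 * (L + 1 / ε) * (1 / (ε * Real.log 2) + 1), by positivity, fun N hN => ?_⟩
  have hN2 : (2 : ℝ) ≤ N := by exact_mod_cast hN
  have hN0 : (0 : ℝ) < N := by linarith
  have hN1 : (1 : ℝ) ≤ N := by linarith
  set y : ℝ := (N : ℝ) ^ (1 / (2 * T) : ℝ) with hy
  have hy1 : 1 ≤ y := Real.one_le_rpow hN1 (by positivity)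
  have hH1 : 1 ≤ ⌊y⌋₊ := by rw [Nat.one_le_floor_iff]; exact hy1
  have hHy : (⌊y⌋₊ : ℝ) ≤ y := Nat.floor_le (by linarith)
  have hHy2 : y ≤ 2 * ⌊y⌋₊ := by
    have := Nat.lt_floor_add_one y
    have : (1 : ℝ) ≤ ⌊y⌋₊ := by exact_mod_cast hH1
    linarith
  have hHpos : (0 : ℝ) < ⌊y⌋₊ := by exact_mod_cast hH1
  refine ⟨⌊y⌋₊, hH1, ?_, ?_⟩
  · have h1 : (⌊y⌋₊ : ℝ) ^ T ≤ (N : ℝ) ^ (1 / 2 : ℝ) := by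
      calc (⌊y⌋₊ : ℝ) ^ T ≤ y ^ T := pow_le_pow_left₀ hHpos.le hHy T
        _ = (N : ℝ) ^ (1 / 2 : ℝ) := by
          rw [hy, ← Real.rpow_natCast, ← Real.rpow_mul hN0.le]
          congr 1; field_simp
    have h2 : (N : ℝ) ^ (1 / 2 : ℝ) < (N : ℝ) ^ (1 : ℝ) :=
      Real.rpow_lt_rpow_of_exponent_lt (by linarith) (by norm_num)
    rw [Real.rpow_one] at h2
    exact_mod_cast h1.trans_lt h2
  · set w : ℝ := (N : ℝ) ^ ε with hw
    have hw1 : 1 ≤ w := Real.one_le_rpow hN1 hε0.le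
    have hw0 : 0 < w := by linarith
    have hyw : y = w ^ 4 := by
      rw [hy, hw, ← Real.rpow_natCast, ← Real.rpow_mul hN0.le]
      congr 1; rw [hε]; push_cast; field_simp; norm_num
    have hNw : (N : ℝ) ^ (-(1 / (4 * T) : ℝ)) = (w ^ 2)⁻¹ := by
      rw [Real.rpow_neg hN0.le, hw, ← Real.rpow_natCast, ← Real.rpow_mul hN0.le]
      congr 2; rw [hε]; push_cast; field_simp; norm_num
    have hlog : Real.log N ≤ w / ε := Real.log_le_rpow_div hN0.le hε0
    have hlog0 : 0 ≤ Real.log N := Real.log_nonneg hN1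
    have hφ := le_totient_mul N (by omega)
    have hA : L + Real.log N ≤ (L + 1 / ε) * w := by
      have : L ≤ L * w := le_mul_of_one_le_right hL hw1
      have h2 : w / ε = 1 / ε * w := by ring
      rw [add_mul]; linarith
    have hB : Real.log N / Real.log 2 + 1 ≤ (1 / (ε * Real.log 2) + 1) * w := by
      have h1 : Real.log N / Real.log 2 ≤ w / ε / Real.log 2 :=
        div_le_div_of_nonneg_right hlog hl2.le
      have h2 : w / ε / Real.log 2 = 1 / (ε * Real.log 2) * w := by field_simp
      rw [add_mul, one_mul]; linarith
    have hC : (N : ℝ) / ⌊y⌋₊ ≤ 2 * N / w ^ 4 := by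
      rw [div_le_div_iff₀ hHpos (by positivity), ← hyw]
      nlinarith
    rw [hNw]
    have hφ0 : (0 : ℝ) ≤ N.totient := by positivity
    calc 2 * ((N : ℝ) / ⌊y⌋₊) * (L + Real.log N)
        ≤ 2 * (2 * N / w ^ 4) * ((L + 1 / ε) * w) := by gcongr
      _ ≤ 2 * (2 * (N.totient * ((1 / (ε * Real.log 2) + 1) * w)) / w ^ 4) *
          ((L + 1 / ε) * w) := by
          have : (N : ℝ) ≤ N.totient * ((1 / (ε * Real.log 2) + 1) * w) :=
            hφ.trans (mul_le_mul_of_nonneg_left hB hφ0)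
          gcongr
      _ = N.totient * (4 * (L + 1 / ε) * (1 / (ε * Real.log 2) + 1)) * (w ^ 2)⁻¹ := by
          field_simp; ring
end PartSeven

set_option linter.unusedSectionVars false
section PartEight
open Polynomial
variable {K : Type*} [NontriviallyNormedField K] [IsUltrametricDist K]

lemma chi_int {N : ℕ} (χ : AddChar (ZMod N) K) (m : ℤ) : χ (m : ZMod N) = χ 1 ^ m := by
  rw [← AddChar.map_zsmul_eq_zpow, zsmul_one]

lemma chi_val {N : ℕ} [NeZero N] (χ : AddChar (ZMod N) K) (x : ZMod N) :
    χ 1 ^ x.val = χ x := by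
  rw [← AddChar.map_nsmul_eq_pow, nsmul_one, ZMod.natCast_zmod_val]

lemma chi_root {N : ℕ} (χ : AddChar (ZMod N) K) (x : ZMod N) : χ x ^ N = 1 := by
  rw [← AddChar.map_nsmul_eq_pow, nsmul_eq_mul, ZMod.natCast_self, zero_mul,
    AddChar.map_zero_eq_one]

lemma chi_norm {N : ℕ} [NeZero N] (χ : AddChar (ZMod N) K) (x : ZMod N) : ‖χ x‖ = 1 :=
  norm_root_one (Nat.pos_of_ne_zero (NeZero.ne N)) (chi_root χ x)

lemma chi_inj {N : ℕ} [NeZero N] (χ : AddChar (ZMod N) K) (hχ : IsPrimitiveRoot (χ 1) N)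
    {x : ZMod N} (h : χ x = 1) : x = 0 := by
  rw [← chi_val] at h
  have := hχ.dvd_of_pow_eq_one _ h
  rw [← ZMod.val_eq_zero]
  exact Nat.eq_zero_of_dvd_of_lt this (ZMod.val_lt x)

/-- The value of an exponential sum at a point of `ZMod N`. -/
noncomputable def Vsum {ι : Type*} {N : ℕ} (χ : AddChar (ZMod N) K) (s : Finset ι) (a : ι → K)
    (b : ι → ℤ) (τ : ZMod N) : K := ∑ i ∈ s, a i * χ ((b i : ZMod N) * τ)

lemma sum_units_eq {N : ℕ} [NeZero N] (g : ZMod N → ℝ) [DecidablePred fun x : ZMod N => IsUnit x] :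
    ∑ τ : (ZMod N)ˣ, g τ = ∑ x : ZMod N, if IsUnit x then g x else 0 := by
  classical
  rw [← Finset.sum_filter]
  refine Finset.sum_bij (fun τ _ => (τ : ZMod N)) ?_ ?_ ?_ ?_
  · intro τ _; simp
  · intro τ _ τ' _ h; exact Units.ext h
  · intro x hx
    obtain ⟨τ, hτ⟩ := (Finset.mem_filter.1 hx).2
    exact ⟨τ, Finset.mem_univ _, hτ⟩
  · intro _ _; rfl

variable [IsAlgClosed K]

lemma step_sigma {ι : Type*} [DecidableEq ι] {p : ℕ} (hp : p.Prime)
    (hpnorm : ‖(p : K)‖ = (p : ℝ)⁻¹) {N : ℕ} [NeZero N]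
    (χ : AddChar (ZMod N) K) (hχ : IsPrimitiveRoot (χ 1) N) (s : Finset ι) (i₀ : ι)
    (a : ι → K) (ha : ∀ i, ‖a i‖ ≤ 1) (b : ι → ℤ) (u : ℕ) (x : ι → ℤ) (R : ℕ)
    (hx : ∀ i, (N : ℤ) ∣ x i - u * b i) (hR : ∀ i, (x i).natAbs ≤ R) {c : ℝ} (hc : 0 < c)
    (hc1 : c ≤ 1) (hV : ∀ τ : ZMod N, IsUnit τ → c ≤ ‖Vsum χ s a b τ‖)
    (hV' : ∀ τ : ZMod N, IsUnit τ → Vsum χ (s.filter fun i => x i = x i₀) a b τ ≠ 0)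
    [DecidablePred fun x : ZMod N => IsUnit x] (σ : ZMod N) :
    ∑ k : ZMod N, (if IsUnit (σ + u * k) then
      (Real.log ‖Vsum χ (s.filter fun i => x i = x i₀) a b (σ + u * k)‖ -
        Real.log ‖Vsum χ s a b (σ + u * k)‖) else 0) ≤
      2 * R * (Real.log (1 / c) + Real.log N) := by
  classical
  have hN : 0 < N := Nat.pos_of_ne_zero (NeZero.ne N)
  have hN1 : (1 : ℝ) ≤ N := by exact_mod_cast hN
  have hnn : 0 ≤ Real.log (1 / c) + Real.log N :=
    add_nonneg (Real.log_nonneg ((one_le_div hc).2 hc1)) (Real.log_nonneg hN1)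
  set s' := s.filter fun i => x i = x i₀ with hs'
  have hxz : ∀ i, (x i : ZMod N) = u * (b i : ZMod N) := by
    intro i
    have := (ZMod.intCast_zmod_eq_zero_iff_dvd (x i - u * b i) N).2 (hx i)
    push_cast at this
    exact sub_eq_zero.1 this
  have hxR : ∀ i, 0 ≤ x i + R := fun i => by have := hR i; omega
  have hxR2 : ∀ i, (x i + R).toNat ≤ 2 * R := fun i => by have := hR i; omega
  set S : Finset (ZMod N) := Finset.univ.filter fun k => IsUnit (σ + u * k) with hS
  rw [← Finset.sum_filter, ← hS]
  rcases S.eq_empty_or_nonempty with hemp | ⟨k₁, hk₁⟩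
  · rw [hemp, Finset.sum_empty]; positivity
  set f : K[X] := ∑ i ∈ s, monomial (x i + R).toNat (a i * χ ((b i : ZMod N) * σ)) with hf
  set l := (x i₀ + R).toNat with hl
  have hcoeff : ∀ m, f.coeff m = ∑ i ∈ s, if (x i + R).toNat = m then
      a i * χ ((b i : ZMod N) * σ) else 0 := by
    intro m
    rw [hf, finsetSum_coeff]
    exact Finset.sum_congr rfl fun i _ => coeff_monomial
  have hfl : f.coeff l = Vsum χ s' a b σ := by
    rw [hcoeff, Vsum, hs', Finset.sum_filter]
    refine Finset.sum_congr rfl fun i _ => ?_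
    have h1 := hxR i
    have h2 := hxR i₀
    have : ((x i + R).toNat = l) ↔ x i = x i₀ := by omega
    simp only [this]
  have hf1 : ∀ m, ‖f.coeff m‖ ≤ 1 := by
    intro m
    rw [hcoeff]
    refine norm_sum_le_bd _ _ zero_le_one fun i _ => ?_
    split_ifs
    · rw [norm_mul, chi_norm, mul_one]; exact ha i
    · simp
  have hdeg : f.natDegree ≤ 2 * R :=
    natDegree_sum_le_of_forall_le _ _ fun i _ => (natDegree_monomial_le _).trans (hxR2 i)
  have hev : ∀ k : ZMod N, ‖f.eval (χ 1 ^ k.val)‖ = ‖Vsum χ s a b (σ + u * k)‖ := by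
    intro k
    have : f.eval (χ 1 ^ k.val) = χ (R * k) * Vsum χ s a b (σ + u * k) := by
      rw [chi_val, hf, eval_finsetSum, Vsum, Finset.mul_sum]
      refine Finset.sum_congr rfl fun i _ => ?_
      rw [eval_monomial, ← AddChar.map_nsmul_eq_pow, nsmul_eq_mul]
      have h1 : (((x i + R).toNat : ℕ) : ZMod N) = u * (b i : ZMod N) + R := by
        rw [← hxz i]
        have : (((x i + R).toNat : ℤ) : ZMod N) = ((x i + R : ℤ) : ZMod N) := by
          rw [Int.toNat_of_nonneg (hxR i)]
        push_cast at this
        exact this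
      rw [h1, mul_assoc, ← AddChar.map_add_eq_mul, mul_left_comm, ← AddChar.map_add_eq_mul]
      congr 2
      ring
    rw [this, norm_mul, chi_norm, one_mul]
  have hinv : ∀ k : ZMod N, ‖Vsum χ s' a b (σ + u * k)‖ = ‖Vsum χ s' a b σ‖ := by
    intro k
    have : Vsum χ s' a b (σ + u * k) = χ ((x i₀ : ZMod N) * k) * Vsum χ s' a b σ := by
      rw [Vsum, Vsum, Finset.mul_sum]
      refine Finset.sum_congr rfl fun i hi => ?_
      rw [← (Finset.mem_filter.1 hi).2, hxz i, mul_left_comm, ← AddChar.map_add_eq_mul]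
      congr 2
      ring
    rw [this, norm_mul, chi_norm, one_mul]
  have hl0 : f.coeff l ≠ 0 := by
    rw [hfl, ← norm_pos_iff, ← hinv k₁, norm_pos_iff]
    exact hV' _ (Finset.mem_filter.1 hk₁).2
  have hmain := poly_lemma hp hpnorm hN hχ (S.image ZMod.val) (by
      intro k hk
      obtain ⟨k', -, rfl⟩ := Finset.mem_image.1 hk
      exact Finset.mem_range.2 (ZMod.val_lt k')) f hc hc1 hf1 (by
      intro k hk
      obtain ⟨k', hk', rfl⟩ := Finset.mem_image.1 hk
      rw [hev]
      exact hV _ (Finset.mem_filter.1 hk').2) l hl0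
  rw [Finset.sum_image fun k _ k' _ h => ZMod.val_injective N h] at hmain
  calc _ = ∑ k ∈ S, (Real.log ‖f.coeff l‖ - Real.log ‖f.eval (χ 1 ^ k.val)‖) := by
        refine Finset.sum_congr rfl fun k _ => ?_
        rw [hev, hinv, hfl]
    _ ≤ _ := hmain
    _ ≤ _ := by
        refine mul_le_mul_of_nonneg_right ?_ hnn
        exact_mod_cast hdeg

lemma step_ineq {ι : Type*} [DecidableEq ι] {p : ℕ} (hp : p.Prime)
    (hpnorm : ‖(p : K)‖ = (p : ℝ)⁻¹) {N : ℕ} [NeZero N]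
    (χ : AddChar (ZMod N) K) (hχ : IsPrimitiveRoot (χ 1) N) (s : Finset ι) (i₀ : ι)
    (a : ι → K) (ha : ∀ i, ‖a i‖ ≤ 1) (b : ι → ℤ) (u : ℕ) (x : ι → ℤ) (R : ℕ)
    (hx : ∀ i, (N : ℤ) ∣ x i - u * b i) (hR : ∀ i, (x i).natAbs ≤ R) {c : ℝ} (hc : 0 < c)
    (hc1 : c ≤ 1) (hV : ∀ τ : ZMod N, IsUnit τ → c ≤ ‖Vsum χ s a b τ‖)
    (hV' : ∀ τ : ZMod N, IsUnit τ → Vsum χ (s.filter fun i => x i = x i₀) a b τ ≠ 0) :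
    ∑ τ : (ZMod N)ˣ, -Real.log ‖Vsum χ s a b τ‖ ≤
      (∑ τ : (ZMod N)ˣ, -Real.log ‖Vsum χ (s.filter fun i => x i = x i₀) a b τ‖) +
      2 * R * (Real.log (1 / c) + Real.log N) := by
  classical
  have hN : 0 < N := Nat.pos_of_ne_zero (NeZero.ne N)
  have hN0 : (0 : ℝ) < N := by exact_mod_cast hN
  set g : ZMod N → ℝ := fun τ => if IsUnit τ then
      (Real.log ‖Vsum χ (s.filter fun i => x i = x i₀) a b τ‖ -
        Real.log ‖Vsum χ s a b τ‖) else 0 with hg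
  have h1 : ∀ σ, ∑ k : ZMod N, g (σ + u * k) ≤ 2 * R * (Real.log (1 / c) + Real.log N) :=
    fun σ => step_sigma hp hpnorm χ hχ s i₀ a ha b u x R hx hR hc hc1 hV hV' σ
  have h2 : ∑ σ : ZMod N, ∑ k : ZMod N, g (σ + u * k) = N * ∑ τ, g τ := by
    rw [Finset.sum_comm]
    have : ∀ k : ZMod N, ∑ σ : ZMod N, g (σ + u * k) = ∑ τ, g τ := fun k =>
      Equiv.sum_comp (Equiv.addRight ((u : ZMod N) * k)) g
    simp only [this, Finset.sum_const, Finset.card_univ, ZMod.card, nsmul_eq_mul]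
  have h3 := Finset.sum_le_sum fun σ (_ : σ ∈ Finset.univ) => h1 σ
  rw [h2, Finset.sum_const, Finset.card_univ, ZMod.card, nsmul_eq_mul] at h3
  have h4 := le_of_mul_le_mul_left h3 hN0
  rw [hg, ← sum_units_eq (fun τ => Real.log ‖Vsum χ (s.filter fun i => x i = x i₀) a b τ‖ -
        Real.log ‖Vsum χ s a b τ‖)] at h4
  rw [Finset.sum_sub_distrib] at h4
  rw [Finset.sum_neg_distrib, Finset.sum_neg_distrib]
  linarith
end PartEight

set_option linter.unusedSectionVars false
section PartNine
variable {K : Type*} [NontriviallyNormedField K] [IsUltrametricDist K]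

/-- Separation condition on the frequencies of an exponential sum. -/
def SepCond {ι : Type*} (N : ℕ) (s : Finset ι) (b : ι → ℤ) (B : ℝ) : Prop :=
  ∀ i ∈ s, ∀ j ∈ s, i ≠ j → ∀ u : ℕ, 0 < u → (u : ℝ) < B → ¬ (N : ℤ) ∣ u * (b i - b j)

/-- Quantitative equidistribution bound for the exponential sum supported on `s`. -/
def PropL {ι : Type*} (a : ι → K) (κ : ℝ) (s : Finset ι) (B₀ D : ℝ) : Prop :=
  ∀ (N : ℕ) [NeZero N] (χ : AddChar (ZMod N) K), IsPrimitiveRoot (χ 1) N →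
    ∀ (b : ι → ℤ) (B : ℝ), B₀ ≤ B → SepCond N s b B →
      (∀ τ : (ZMod N)ˣ, Vsum χ s a b τ ≠ 0) ∧
      ∑ τ : (ZMod N)ˣ, -Real.log ‖Vsum χ s a b τ‖ ≤ N.totient * D * B ^ (-κ)

lemma normalize_freq {ι : Type*} {N : ℕ} [NeZero N] (χ : AddChar (ZMod N) K)
    (hχ : IsPrimitiveRoot (χ 1) N) (s : Finset ι) (a : ι → K) (b : ι → ℤ) (i₀ : ι) :
    ∃ (N₀ : ℕ) (_ : NeZero N₀) (χ₀ : AddChar (ZMod N₀) K) (b' : ι → ℤ) (h : N₀ ∣ N),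
      IsPrimitiveRoot (χ₀ 1) N₀ ∧ b' i₀ = 0 ∧
      (∀ τ : ZMod N, ‖Vsum χ s a b τ‖ = ‖Vsum χ₀ s a b' (ZMod.castHom h (ZMod N₀) τ)‖) ∧
      (∀ i ∈ s, ∀ j ∈ s, ∀ u : ℤ, (N₀ : ℤ) ∣ u * (b' i - b' j) → (N : ℤ) ∣ u * (b i - b j)) ∧
      (∀ u : ℤ, (∀ i ∈ s, (N₀ : ℤ) ∣ u * b' i) → (N₀ : ℤ) ∣ u) ∧
      (∀ i ∈ s, (N : ℤ) ∣ N₀ * (b i - b i₀)) := by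
  classical
  have hN : 0 < N := Nat.pos_of_ne_zero (NeZero.ne N)
  set d : ℤ := s.gcd fun i => b i - b i₀ with hd
  set g : ℕ := Int.gcd N d with hg
  have hgN : g ∣ N := by exact_mod_cast (Int.gcd_dvd_left (N : ℤ) d)
  obtain ⟨N₀, hN₀⟩ := hgN
  have hg0 : 0 < g := Nat.pos_of_ne_zero fun h => by rw [h, zero_mul] at hN₀; omega
  have hN₀0 : 0 < N₀ := Nat.pos_of_ne_zero fun h => by rw [h, mul_zero] at hN₀; omega
  have hgd : ∀ i ∈ s, (g : ℤ) ∣ b i - b i₀ := fun i hi =>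
    (Int.gcd_dvd_right (N : ℤ) d).trans (Finset.gcd_dvd hi)
  have hgz : (g : ℤ) ≠ 0 := by exact_mod_cast hg0.ne'
  have hNz : (N : ℤ) = g * N₀ := by exact_mod_cast hN₀
  set b' : ι → ℤ := fun i => (b i - b i₀) / g with hb'
  have hb : ∀ i ∈ s, b i - b i₀ = g * b' i := fun i hi =>
    (Int.mul_ediv_cancel' (hgd i hi)).symm
  have hne : NeZero N₀ := ⟨hN₀0.ne'⟩
  have hθ : IsPrimitiveRoot (χ 1 ^ g) N₀ := hχ.pow hN hN₀
  have hdvd : N₀ ∣ N := ⟨g, by rw [hN₀, mul_comm]⟩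
  set χ₀ : AddChar (ZMod N₀) K := AddChar.zmodChar N₀ hθ.pow_eq_one with hχ₀
  have hχ1 : χ₀ 1 = χ 1 ^ g := by
    have := AddChar.zmodChar_apply' hθ.pow_eq_one 1
    rw [Nat.cast_one, pow_one] at this
    exact this
  refine ⟨N₀, hne, χ₀, b', hdvd, by rw [hχ1]; exact hθ, by simp [hb'], ?_, ?_, ?_, ?_⟩
  · intro τ
    have : Vsum χ s a b τ =
        χ ((b i₀ : ZMod N) * τ) * Vsum χ₀ s a b' (ZMod.castHom hdvd (ZMod N₀) τ) := by
      rw [Vsum, Vsum, Finset.mul_sum]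
      refine Finset.sum_congr rfl fun i hi => ?_
      have h1 : χ₀ ((b' i : ZMod N₀) * ZMod.castHom hdvd (ZMod N₀) τ) =
          χ (((b i - b i₀ : ℤ) : ZMod N) * τ) := by
        obtain ⟨t, rfl⟩ : ∃ t : ℕ, (t : ZMod N) = τ := ⟨τ.val, ZMod.natCast_zmod_val τ⟩
        have e1 : (b' i : ZMod N₀) * ZMod.castHom hdvd (ZMod N₀) (t : ZMod N) =
            ((b' i * t : ℤ) : ZMod N₀) := by
          rw [map_natCast]; push_cast; rfl
        have e2 : ((b i - b i₀ : ℤ) : ZMod N) * (t : ZMod N) =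
            ((g * (b' i * t) : ℤ) : ZMod N) := by
          rw [hb i hi]; push_cast; ring
        rw [e1, e2, chi_int, chi_int, hχ1, zpow_mul (χ 1) (g : ℤ) (b' i * t), zpow_natCast]
      rw [h1, mul_left_comm, ← AddChar.map_add_eq_mul]
      congr 2
      push_cast
      ring
    rw [this, norm_mul, chi_norm, one_mul]
  · intro i hi j hj u hu
    have : u * (b i - b j) = g * (u * (b' i - b' j)) := by
      linear_combination u * hb i hi - u * hb j hj
    rw [this, hNz]
    exact mul_dvd_mul_left _ hu
  · intro u hu
    have h1 : ∀ i ∈ s, (N : ℤ) ∣ u * (b i - b i₀) := by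
      intro i hi
      rw [hb i hi, hNz, mul_left_comm]
      exact mul_dvd_mul_left _ (hu i hi)
    have h2 : (N : ℤ) ∣ u * d := by
      have h3 : (N : ℤ) ∣ s.gcd fun i => u * (b i - b i₀) := Finset.dvd_gcd h1
      rw [Finset.gcd_mul_left] at h3
      exact h3.trans (mul_dvd_mul_right (normalize_dvd_iff.2 dvd_rfl) _)
    have h4 : (N : ℤ) ∣ u * g := by
      have h5 := Int.gcd_eq_gcd_ab (N : ℤ) d
      rw [← hg] at h5
      rw [h5, mul_add]
      refine dvd_add ?_ ?_
      · exact (dvd_mul_right (N : ℤ) _).trans (dvd_mul_left _ _)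
      · rw [← mul_assoc]; exact h2.trans (dvd_mul_right _ _)
    rw [hNz, mul_comm] at h4
    exact Int.dvd_of_mul_dvd_mul_right hgz h4
  · intro i hi
    rw [hb i hi, hNz]
    exact ⟨b' i, by ring⟩

variable [IsAlgClosed K] [CharZero K]

lemma lower_bound {ι : Type*} {p : ℕ} (hp : p.Prime) (hpnorm : ‖(p : K)‖ = (p : ℝ)⁻¹)
    (s : Finset ι) (a : ι → K) (i₀ : ι) (hi₀ : i₀ ∈ s) (ha0 : a i₀ ≠ 0) :
    ∃ c : ℝ, 0 < c ∧ c ≤ 1 ∧ ∃ B₀ : ℝ, ∀ (N : ℕ) [NeZero N] (χ : AddChar (ZMod N) K),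
      IsPrimitiveRoot (χ 1) N → ∀ (b : ι → ℤ) (B : ℝ), B₀ ≤ B → SepCond N s b B →
      ∀ τ : ZMod N, IsUnit τ → c ≤ ‖Vsum χ s a b τ‖ := by
  obtain ⟨c, hc, B₁, hB₁, h⟩ := lemmaT (ι := s) hp hpnorm (fun i => a i) ⟨i₀, hi₀⟩ ha0
  refine ⟨min c 1, lt_min hc one_pos, min_le_right _ _, B₁ + 1, ?_⟩
  intro N hN χ hχ b B hB hsep τ hτ
  by_contra! hlt
  have hlt' : ‖∑ i : s, a i * χ ((b i : ZMod N) * τ)‖ < c := by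
    rw [Finset.sum_coe_sort s (fun i => a i * χ ((b i : ZMod N) * τ))]
    exact hlt.trans_le (min_le_left _ _)
  obtain ⟨i, j, hij, heq⟩ := h (fun i => χ ((b i : ZMod N) * τ))
    (fun i => ⟨N, Nat.pos_of_ne_zero hN.out, chi_root χ _⟩) hlt'
  have hij' : (i : ι) ≠ j := fun h => hij (Subtype.ext h)
  refine hsep i i.2 j j.2 hij' B₁ hB₁ (by linarith) ?_
  rw [← AddChar.map_nsmul_eq_pow, ← AddChar.map_nsmul_eq_pow] at heq
  have h1 : χ (B₁ • ((b i : ZMod N) * τ) - B₁ • ((b j : ZMod N) * τ)) = 1 := by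
    rw [AddChar.map_sub_eq_div, heq, div_self]
    intro h0
    have := chi_norm χ (B₁ • ((b j : ZMod N) * τ))
    rw [h0, norm_zero] at this
    exact zero_ne_one this
  have h2 := chi_inj χ hχ h1
  have h3 : ((B₁ * (b i - b j) : ℤ) : ZMod N) * τ = 0 := by
    rw [← h2]; push_cast; simp only [nsmul_eq_mul]; ring
  rw [hτ.mul_left_eq_zero] at h3
  exact (ZMod.intCast_zmod_eq_zero_iff_dvd _ N).1 h3

end PartNine

section PartTen
variable {K : Type*} [NontriviallyNormedField K] [IsUltrametricDist K] [IsAlgClosed K] [CharZero K]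

lemma thmL {ι : Type*} [Fintype ι] {p : ℕ} (hp : p.Prime) (hpnorm : ‖(p : K)‖ = (p : ℝ)⁻¹)
    (a : ι → K) (ha : ∀ i, ‖a i‖ ≤ 1) (i₀ : ι) (ha1 : ‖a i₀‖ = 1) (s : Finset ι) :
    i₀ ∈ s → ∃ B₀ D : ℝ, 0 ≤ D ∧ PropL a (1 / (4 * Fintype.card ι) : ℝ) s B₀ D := by
  classical
  have hT : 0 < Fintype.card ι := Fintype.card_pos_iff.2 ⟨i₀⟩
  set κ : ℝ := 1 / (4 * Fintype.card ι) with hκ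
  have hκ0 : 0 < κ := by
    have : (0 : ℝ) < Fintype.card ι := by exact_mod_cast hT
    positivity
  induction s using Finset.strongInduction with
  | H s ih =>
  intro hi₀
  have ha0 : a i₀ ≠ 0 := norm_pos_iff.1 (by rw [ha1]; exact one_pos)
  by_cases hs : s = {i₀}
  · refine ⟨0, 0, le_rfl, ?_⟩
    intro N _ χ hχ b B _ _
    have h1 : ∀ τ, ‖Vsum χ s a b τ‖ = 1 := by
      intro τ
      rw [Vsum, hs, Finset.sum_singleton, norm_mul, chi_norm, ha1, one_mul]
    refine ⟨fun τ => norm_pos_iff.1 (by rw [h1]; exact one_pos), ?_⟩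
    simp [h1]
  obtain ⟨j₀, hj₀, hj₀ne⟩ : ∃ j ∈ s, j ≠ i₀ := by
    by_contra! h
    exact hs (Finset.eq_singleton_iff_unique_mem.2 ⟨hi₀, h⟩)
  have ih' : ∀ s' : Finset ι, ∃ B₀ D : ℝ, 0 ≤ D ∧ (s' ⊂ s → i₀ ∈ s' → PropL a κ s' B₀ D) := by
    intro s'
    by_cases h : s' ⊂ s ∧ i₀ ∈ s'
    · obtain ⟨B₀, D, hD, hP⟩ := ih s' h.1 h.2
      exact ⟨B₀, D, hD, fun _ _ => hP⟩
    · exact ⟨0, 0, le_rfl, fun h1 h2 => absurd ⟨h1, h2⟩ h⟩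
  choose Bf Df hDf hPf using ih'
  obtain ⟨c, hc, hc1, BT, hlow⟩ := lower_bound hp hpnorm s a i₀ hi₀ ha0
  have hL : 0 ≤ Real.log (1 / c) := Real.log_nonneg ((one_le_div hc).2 hc1)
  obtain ⟨D₁, hD₁, hnum⟩ := numeric_bound (Fintype.card ι) hT (Real.log (1 / c)) hL
  have hBsum : 0 ≤ ∑ s', |Bf s'| := Finset.sum_nonneg fun _ _ => abs_nonneg _
  refine ⟨2 + |BT| + ∑ s', |Bf s'|, D₁ + ∑ s', Df s',
    add_nonneg hD₁ (Finset.sum_nonneg fun s' _ => hDf s'), ?_⟩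
  intro N _ χ hχ b B hB hsep
  have hBT : BT ≤ B := by linarith [le_abs_self BT]
  have hB2 : 2 ≤ B := by linarith [abs_nonneg BT]
  have hBf : ∀ s', Bf s' ≤ B := fun s' => by
    have h1 := Finset.single_le_sum (f := fun s' => |Bf s'|) (fun _ _ => abs_nonneg _)
      (Finset.mem_univ s')
    have h2 := le_abs_self (Bf s')
    have h3 := abs_nonneg BT
    linarith
  refine ⟨fun τ => norm_pos_iff.1 (hc.trans_le (hlow N χ hχ b B hBT hsep τ τ.isUnit)), ?_⟩
  obtain ⟨N₀, hne, χ₀, b', hdvd, hχ₀, hb'0, hVeq, htrans, hgcd, hN₀B⟩ :=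
    normalize_freq χ hχ s a b i₀
  have hN₀ : 0 < N₀ := Nat.pos_of_ne_zero hne.out
  have hBN : B ≤ N₀ := by
    by_contra! hlt
    exact hsep j₀ hj₀ i₀ hi₀ hj₀ne N₀ hN₀ hlt (by exact_mod_cast hN₀B j₀ hj₀)
  have hsep' : SepCond N₀ s b' B := fun i hi j hj hij u hu huB hd =>
    hsep i hi j hj hij u hu huB (htrans i hi j hj u hd)
  have hN₀2 : 2 ≤ N₀ := by
    have : (2 : ℝ) ≤ N₀ := hB2.trans hBN
    exact_mod_cast this
  obtain ⟨H, hH, hHT, hHb⟩ := hnum N₀ hN₀2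
  obtain ⟨u, x, hu, huN, hxu, hxH⟩ := dirichlet N₀ H hN₀ hH hHT b'
  set R : ℕ := N₀ / H with hR
  have hxR : ∀ i, (x i).natAbs ≤ R := fun i => (Nat.le_div_iff_mul_le hH).2 (hxH i)
  set s' := s.filter fun i => x i = x i₀ with hs'
  have hi₀' : i₀ ∈ s' := Finset.mem_filter.2 ⟨hi₀, rfl⟩
  have hss : s' ⊂ s := by
    refine Finset.filter_ssubset.2 ?_
    by_contra! hall
    have h0 : (N₀ : ℤ) ∣ x i₀ := by
      have := hxu i₀
      rwa [hb'0, mul_zero, sub_zero] at this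
    have h1 : (N₀ : ℤ) ∣ u := by
      refine hgcd u fun i hi => ?_
      have h2 := hxu i
      rw [hall i hi] at h2
      exact (dvd_sub_right h0).1 h2
    have h2 : N₀ ∣ u := by exact_mod_cast h1
    exact absurd (Nat.le_of_dvd hu h2) (not_le.2 huN)
  have hsep'' : SepCond N₀ s' b' B := fun i hi j hj =>
    hsep' i (Finset.mem_filter.1 hi).1 j (Finset.mem_filter.1 hj).1
  obtain ⟨hV', hE'⟩ := hPf s' hss hi₀' N₀ χ₀ hχ₀ b' B (hBf s') hsep''
  have hstep := step_ineq hp hpnorm χ₀ hχ₀ s i₀ a ha b' u x R hxu hxR hc hc1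
    (hlow N₀ χ₀ hχ₀ b' B hBT hsep') (by
      rintro τ ⟨τ', rfl⟩
      exact hV' τ')
  have hφ₀ : (0 : ℝ) < N₀.totient := by exact_mod_cast Nat.totient_pos.2 hN₀
  have hφ : (0 : ℝ) ≤ N.totient := by positivity
  have hBpos : 0 < B := by linarith
  have hpow : (N₀ : ℝ) ^ (-κ) ≤ B ^ (-κ) :=
    Real.rpow_le_rpow_of_nonpos hBpos hBN (by linarith)
  have hBk : 0 ≤ B ^ (-κ) := Real.rpow_nonneg hBpos.le _
  have hRle : (R : ℝ) ≤ (N₀ : ℝ) / H := Nat.cast_div_le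
  have hlogN : 0 ≤ Real.log N₀ := Real.log_nonneg (by exact_mod_cast hN₀)
  have hE1 : 2 * (R : ℝ) * (Real.log (1 / c) + Real.log N₀) ≤ N₀.totient * D₁ * B ^ (-κ) := by
    calc 2 * (R : ℝ) * (Real.log (1 / c) + Real.log N₀)
        ≤ 2 * ((N₀ : ℝ) / H) * (Real.log (1 / c) + Real.log N₀) := by gcongr
      _ ≤ N₀.totient * D₁ * (N₀ : ℝ) ^ (-κ) := hHb
      _ ≤ N₀.totient * D₁ * B ^ (-κ) := by gcongr
  have hE2 : (N₀.totient : ℝ) * Df s' * B ^ (-κ) ≤ N₀.totient * (∑ s', Df s') * B ^ (-κ) := by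
    have := Finset.single_le_sum (f := Df) (fun s' _ => hDf s') (Finset.mem_univ s')
    gcongr
  have hE : ∑ τ : (ZMod N₀)ˣ, -Real.log ‖Vsum χ₀ s a b' τ‖ ≤
      N₀.totient * (D₁ + ∑ s', Df s') * B ^ (-κ) := by
    rw [mul_add, add_mul]
    linarith
  have havg := units_average hdvd (fun τ => -Real.log ‖Vsum χ₀ s a b' τ‖)
  have hLHS : ∑ τ : (ZMod N)ˣ, -Real.log ‖Vsum χ s a b τ‖ =
      ∑ τ : (ZMod N)ˣ, -Real.log ‖Vsum χ₀ s a b' (ZMod.unitsMap hdvd τ : (ZMod N₀)ˣ)‖ := by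
    refine Finset.sum_congr rfl fun τ _ => ?_
    rw [hVeq]
    rfl
  rw [hLHS]
  refine le_of_mul_le_mul_left ?_ hφ₀
  rw [havg]
  calc (N.totient : ℝ) * ∑ τ : (ZMod N₀)ˣ, -Real.log ‖Vsum χ₀ s a b' τ‖
      ≤ N.totient * (N₀.totient * (D₁ + ∑ s', Df s') * B ^ (-κ)) :=
        mul_le_mul_of_nonneg_left hE hφ
    _ = _ := by ring
end PartTen

section PartEleven
lemma charZero_aux {K : Type*} [NontriviallyNormedField K] [IsUltrametricDist K] {p : ℕ}
    (hp : p.Prime) (hpnorm : ‖(p : K)‖ = (p : ℝ)⁻¹) : CharZero K := by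
  refine charZero_of_inj_zero fun n hn => ?_
  by_contra h0
  have h := norm_nat_ge hp hpnorm n (Nat.pos_of_ne_zero h0)
  rw [hn, norm_zero] at h
  have : (0 : ℝ) < (n : ℝ)⁻¹ := inv_pos.2 (by exact_mod_cast Nat.pos_of_ne_zero h0)
  linarith
end PartEleven

/-- The `p`-adic equidistribution theorem: for every nonzero
`F ∈ ℂ_p[X₁,…,X_n]` there are `κ > 0` and constants `C, D` such that for every
torsion point `ζ ∈ G_m^n(ℂ_p)` of order `N` with `δ(ζ) ≥ C` one has
`F(σ(ζ)) ≠ 0` for every `σ ∈ Gal(ℚ(ζ)/ℚ) ≅ (ZMod N)ˣ` and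
`|(1/[ℚ(ζ):ℚ])·Σ_σ log|F(σ(ζ))|_p − log|F|_p| ≤ D·δ(ζ)^{-κ}`. -/
theorem stmt18 {p : ℕ} (hp : p.Prime)
    {K : Type*} [NontriviallyNormedField K] [IsUltrametricDist K] [IsAlgClosed K]
    [CompleteSpace K] (hpnorm : ‖(p : K)‖ = (p : ℝ)⁻¹)
    {n : ℕ} (F : MvPolynomial (Fin n) K) (hF : F ≠ 0) :
    ∃ κ : ℝ, 0 < κ ∧ ∃ C D : ℝ, ∀ N : ℕ, ∀ hN : 0 < N, ∀ ζ : Fin n → Kˣ,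
      orderOf ζ = N → C ≤ (deltaNat ζ : ℝ) →
      haveI : NeZero N := ⟨hN.ne'⟩
      (∀ σ : (ZMod N)ˣ,
          MvPolynomial.eval (fun i => ((ζ i ^ ((σ : ZMod N).val) : Kˣ) : K)) F ≠ 0) ∧
        |(1 / (Fintype.card (ZMod N)ˣ : ℝ)) *
            ∑ σ : (ZMod N)ˣ, Real.log
              ‖MvPolynomial.eval (fun i => ((ζ i ^ ((σ : ZMod N).val) : Kˣ) : K)) F‖
          - Real.log (mvGaussNorm F)|
        ≤ D * (deltaNat ζ : ℝ) ^ (-κ) := by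
  classical
  have hcz : CharZero K := charZero_aux hp hpnorm
  have hne : F.support.Nonempty := MvPolynomial.support_nonempty.2 hF
  obtain ⟨d₀, hd₀, hsup⟩ := Finset.exists_mem_eq_sup F.support hne fun d => ‖F.coeff d‖₊
  have hG : mvGaussNorm F = ‖F.coeff d₀‖ := by
    rw [mvGaussNorm, hsup]; rfl
  have hmax : ∀ d ∈ F.support, ‖F.coeff d‖ ≤ ‖F.coeff d₀‖ := by
    intro d hd
    have h1 : ‖F.coeff d‖₊ ≤ F.support.sup fun d => ‖F.coeff d‖₊ :=
      Finset.le_sup (f := fun d => ‖F.coeff d‖₊) hd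
    rw [hsup] at h1
    exact h1
  have hA0 : F.coeff d₀ ≠ 0 := MvPolynomial.mem_support_iff.1 hd₀
  have hA : 0 < ‖F.coeff d₀‖ := norm_pos_iff.2 hA0
  set A := F.coeff d₀ with hAdef
  set a : F.support → K := fun d => F.coeff d / A with ha
  have ha1 : ∀ d, ‖a d‖ ≤ 1 := fun d => by
    rw [ha, norm_div]; exact div_le_one_of_le₀ (hmax d d.2) hA.le
  have had₀ : ‖a ⟨d₀, hd₀⟩‖ = 1 := by
    simp only [ha]
    rw [← hAdef, div_self hA0, norm_one]
  obtain ⟨B₀, D, hD, hPL⟩ := thmL hp hpnorm a ha1 ⟨d₀, hd₀⟩ had₀ Finset.univ (Finset.mem_univ _)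
  have hT : 0 < Fintype.card F.support := Fintype.card_pos_iff.2 ⟨⟨d₀, hd₀⟩⟩
  set κ : ℝ := 1 / (4 * Fintype.card F.support) with hκ
  have hκ0 : 0 < κ := by
    have : (0 : ℝ) < Fintype.card F.support := by exact_mod_cast hT
    positivity
  set M : ℕ := F.totalDegree + 1 with hM
  have hM0 : (0 : ℝ) < M := by rw [hM]; positivity
  have hdM : ∀ d ∈ F.support, ∀ i, d i ≤ M := by
    intro d hd i
    have h1 := MvPolynomial.le_totalDegree hd
    have h2 : d i ≤ d.sum fun _ e => e := by
      rw [Finsupp.sum_fintype _ _ fun _ => rfl]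
      exact Finset.single_le_sum (f := fun i => d i) (fun _ _ => Nat.zero_le _) (Finset.mem_univ i)
    omega
  refine ⟨κ, hκ0, max 1 (B₀ * M), D * (M : ℝ) ^ κ, ?_⟩
  intro N hN ζ hζ hδ
  have hNZ : NeZero N := ⟨hN.ne'⟩
  have hδ1 : (1 : ℝ) ≤ deltaNat ζ := (le_max_left _ _).trans hδ
  have hδ0 : (0 : ℝ) < deltaNat ζ := by linarith
  have hNK : NeZero (N : K) := ⟨by exact_mod_cast hN.ne'⟩
  obtain ⟨ω, hω⟩ := HasEnoughRootsOfUnity.exists_primitiveRoot K N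
  have hζN : ∀ i, (ζ i : K) ^ N = 1 := by
    intro i
    have h1 : ζ ^ N = 1 := by rw [← hζ]; exact pow_orderOf_eq_one ζ
    have h2 := congrFun h1 i
    rw [Pi.pow_apply, Pi.one_apply] at h2
    have h3 := congrArg (Units.val) h2
    simpa using h3
  have hex : ∀ i, ∃ e < N, ω ^ e = (ζ i : K) := fun i => hω.eq_pow_of_pow_eq_one (hζN i)
  choose e he1 he using hex
  set χ : AddChar (ZMod N) K := AddChar.zmodChar N hω.pow_eq_one with hχdef
  have hχ1 : χ 1 = ω := by
    have := AddChar.zmodChar_apply' hω.pow_eq_one 1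
    rw [Nat.cast_one, pow_one] at this
    exact this
  have hχ : IsPrimitiveRoot (χ 1) N := by rw [hχ1]; exact hω
  set b : F.support → ℤ := fun d => ((∑ i, (d : Fin n →₀ ℕ) i * e i : ℕ) : ℤ) with hb
  have hev : ∀ σ : ZMod N, MvPolynomial.eval (fun i => ((ζ i ^ σ.val : Kˣ) : K)) F =
      A * Vsum χ Finset.univ a b σ := by
    intro σ
    rw [MvPolynomial.eval_eq', Vsum, Finset.mul_sum,
      ← Finset.sum_coe_sort F.support]
    refine Finset.sum_congr rfl fun d _ => ?_
    rw [← mul_assoc]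
    congr 1
    · simp only [ha]; field_simp
    · have h1 : ((b d : ℤ) : ZMod N) * σ =
          ((((∑ i, (d : Fin n →₀ ℕ) i * e i) * σ.val : ℕ)) : ZMod N) := by
        rw [Nat.cast_mul, ZMod.natCast_zmod_val, hb, Int.cast_natCast]
      rw [h1, hχdef, AddChar.zmodChar_apply', pow_mul, ← Finset.prod_pow_eq_pow_sum,
        ← Finset.prod_pow]
      refine Finset.prod_congr rfl fun i _ => ?_
      rw [Units.val_pow_eq_pow_val, ← he i]
      rw [← pow_mul, ← pow_mul, ← pow_mul]
      congr 1
      ring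
  set B : ℝ := (deltaNat ζ : ℝ) / M with hB
  have hBB : B₀ ≤ B := by
    rw [hB, le_div_iff₀ hM0]; exact (le_max_right _ _).trans hδ
  have hsep : SepCond N Finset.univ b B := by
    intro d _ d' _ hdd u hu huB hdvd
    have hle : deltaNat ζ ≤ u * M := by
      have hmem : (Finset.univ.sup fun i => ((u * (((d : Fin n →₀ ℕ) i : ℤ) -
          (d' : Fin n →₀ ℕ) i) : ℤ)).natAbs) ∈ {m : ℕ | ∃ a : Fin n → ℤ, a ≠ 0 ∧
          (∏ i, ζ i ^ a i = 1) ∧ m = Finset.univ.sup fun i => (a i).natAbs} := by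
        refine ⟨fun i => u * (((d : Fin n →₀ ℕ) i : ℤ) - (d' : Fin n →₀ ℕ) i), ?_, ?_, rfl⟩
        · intro h0
          apply hdd
          apply Subtype.ext
          ext i
          have h1 := congrFun h0 i
          simp only [Pi.zero_apply, mul_eq_zero] at h1
          omega
        · apply Units.ext
          rw [Units.coe_prod, Units.val_one]
          have hω0 : ω ≠ 0 := hω.ne_zero hN.ne'
          have h1 : ∀ i, (((ζ i) ^ ((u : ℤ) * (((d : Fin n →₀ ℕ) i : ℤ) -
              (d' : Fin n →₀ ℕ) i)) : Kˣ) : K) =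
              ω ^ ((u : ℤ) * (((d : Fin n →₀ ℕ) i : ℤ) - (d' : Fin n →₀ ℕ) i) * e i) := by
            intro i
            rw [Units.val_zpow_eq_zpow_val, ← he i, ← zpow_natCast, ← zpow_mul]
            congr 1
            ring
          simp only [h1]
          have h2 : ∏ i, ω ^ ((u : ℤ) * (((d : Fin n →₀ ℕ) i : ℤ) - (d' : Fin n →₀ ℕ) i) * e i) =
              ω ^ ((u : ℤ) * (b d - b d')) := by
            have h3 : (u : ℤ) * (b d - b d') =
                ∑ i, (u : ℤ) * (((d : Fin n →₀ ℕ) i : ℤ) - (d' : Fin n →₀ ℕ) i) * e i := by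
              simp only [hb]
              push_cast
              rw [← Finset.sum_sub_distrib, Finset.mul_sum]
              exact Finset.sum_congr rfl fun i _ => by ring
            rw [h3]
            symm
            induction (Finset.univ : Finset (Fin n)) using Finset.induction with
            | empty => simp
            | insert i t hi ih => rw [Finset.sum_insert hi, Finset.prod_insert hi, zpow_add₀ hω0, ih]
          rw [h2]
          exact (hω.zpow_eq_one_iff_dvd _).2 hdvd
      refine (Nat.sInf_le hmem).trans (Finset.sup_le fun i _ => ?_)
      rw [Int.natAbs_mul, Int.natAbs_natCast]
      refine Nat.mul_le_mul_left _ ?_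
      have h1 := hdM d d.2 i
      have h2 := hdM d' d'.2 i
      omega
    have hle' : (deltaNat ζ : ℝ) ≤ u * M := by exact_mod_cast hle
    rw [hB, lt_div_iff₀ hM0] at huB
    linarith
  obtain ⟨hV, hE⟩ := hPL N χ hχ b B hBB hsep
  refine ⟨fun σ => ?_, ?_⟩
  · rw [hev]; exact mul_ne_zero hA0 (hV σ)
  have hφ : (0 : ℝ) < N.totient := by exact_mod_cast Nat.totient_pos.2 hN
  have hlog : ∀ σ : (ZMod N)ˣ, Real.log
      ‖MvPolynomial.eval (fun i => ((ζ i ^ ((σ : ZMod N).val) : Kˣ) : K)) F‖ =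
      Real.log ‖A‖ + Real.log ‖Vsum χ Finset.univ a b σ‖ := by
    intro σ
    rw [hev, norm_mul, Real.log_mul hA.ne' (norm_pos_iff.2 (hV σ)).ne']
  have hneg : ∀ σ : (ZMod N)ˣ, Real.log ‖Vsum χ Finset.univ a b σ‖ ≤ 0 := by
    intro σ
    refine Real.log_nonpos (norm_nonneg _) ?_
    refine norm_sum_le_bd _ _ zero_le_one fun d _ => ?_
    rw [norm_mul, chi_norm, mul_one]
    exact ha1 d
  have hsum : ∑ σ : (ZMod N)ˣ, Real.log ‖Vsum χ Finset.univ a b σ‖ ≤ 0 :=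
    Finset.sum_nonpos fun σ _ => hneg σ
  rw [Finset.sum_congr rfl fun σ _ => hlog σ, Finset.sum_add_distrib, Finset.sum_const,
    Finset.card_univ, ZMod.card_units_eq_totient, nsmul_eq_mul, hG]
  have hsimp : 1 / (N.totient : ℝ) * (N.totient * Real.log ‖A‖ +
      ∑ σ : (ZMod N)ˣ, Real.log ‖Vsum χ Finset.univ a b σ‖) - Real.log ‖A‖ =
      (∑ σ : (ZMod N)ˣ, Real.log ‖Vsum χ Finset.univ a b σ‖) / N.totient := by
    field_simp; ring
  rw [hsimp, abs_of_nonpos (div_nonpos_of_nonpos_of_nonneg hsum hφ.le), ← neg_div,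
    div_le_iff₀ hφ]
  rw [Finset.sum_neg_distrib] at hE
  refine hE.trans (le_of_eq ?_)
  rw [hB, Real.div_rpow hδ0.le hM0.le, Real.rpow_neg hM0.le, div_inv_eq_mul]
  ring
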